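/- For every integer ℓ ≥ 2 and every real x > 0, the normalized random variables (K_{ℓ,n} − E[K_{ℓ,n}])/√(Var(K_{ℓ,n})) converge in distribution, as n → ∞, to the standard Gaussian N(0,1); that is, for every bounded continuous function f : ℝ → ℝ, E[f((K_{ℓ,n} − E[K_{ℓ,n}])/√(Var(K_{ℓ,n})))] converges to (1/√(2π)) ∫_{−∞}^{∞} f(s) e^{−s²/2} ds. -/

import Mathlib

open Filter Topology Real MeasureTheory Asymptotics

noncomputable section

/-- Number of joint orbits of the subgroup generated by a tuple of permutations. -/
def kappa {ℓ n : ℕ} (σ : Fin ℓ → Equiv.Perm (Fin n)) : ℕ :=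
  Nat.card (MulAction.orbitRel.Quotient (Subgroup.closure (Set.range σ)) (Fin n))

/-- `Acount ℓ n k` is the number of commuting `ℓ`-tuples of permutations of `{1,…,n}`
with exactly `k` joint orbits. -/
def Acount (ℓ n k : ℕ) : ℕ :=
  Nat.card {σ : Fin ℓ → Equiv.Perm (Fin n) //
    (∀ i j, σ i * σ j = σ j * σ i) ∧ kappa σ = k}

/-- `Hpoly ℓ n x = (1/n!) ∑_k A(ℓ,n,k) x^k`. -/
def Hpoly (ℓ n : ℕ) (x : ℝ) : ℝ :=
  (1 / (n.factorial : ℝ)) * ∑ k ∈ Finset.range (n + 1), (Acount ℓ n k : ℝ) * x ^ k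

/-- Expectation, under the Ewens-like measure `P_{ℓ,n,x}`, of `g(K_{ℓ,n})`. -/
def expectK (ℓ n : ℕ) (x : ℝ) (g : ℕ → ℝ) : ℝ :=
  (∑ k ∈ Finset.range (n + 1), g k * (Acount ℓ n k : ℝ) * x ^ k) /
    (∑ k ∈ Finset.range (n + 1), (Acount ℓ n k : ℝ) * x ^ k)

/-- Mean of `K_{ℓ,n}` under `P_{ℓ,n,x}`. -/
def meanK (ℓ n : ℕ) (x : ℝ) : ℝ := expectK ℓ n x (fun k => (k : ℝ))

/-- Variance of `K_{ℓ,n}` under `P_{ℓ,n,x}`. -/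
def varK (ℓ n : ℕ) (x : ℝ) : ℝ :=
  expectK ℓ n x (fun k => ((k : ℝ) - meanK ℓ n x) ^ 2)

/-- Real Riemann zeta values (as a series), `zetaR s = ∑_{m ≥ 1} m^{-s}`. -/
def zetaR (s : ℝ) : ℝ := ∑' m : ℕ, 1 / ((m : ℝ) + 1) ^ s

/-- The constant `K_ℓ = (ℓ-1)! ζ(2)⋯ζ(ℓ)`. -/
def Kconst (ℓ : ℕ) : ℝ := ((ℓ - 1).factorial : ℝ) * ∏ j ∈ Finset.Icc 2 ℓ, zetaR (j : ℝ)

/-- The multiple series `Z^{[ℓ]}_{α_1,…,α_ℓ}(t)` with complex exponents. -/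
def Zc (ℓ : ℕ) (α : Fin ℓ → ℂ) (t : ℝ) : ℂ :=
  ∑' δ : Fin ℓ → ℕ+,
    (∏ i, ((δ i : ℕ) : ℂ) ^ (α i - 1)) *
      Complex.exp (-(((∏ i, ((δ i : ℕ) : ℝ)) * t : ℝ) : ℂ))

/-- The multiple series `Z^{[ℓ]}_{α_1,…,α_ℓ}(t)` with real exponents. -/
def Zr (ℓ : ℕ) (α : Fin ℓ → ℝ) (t : ℝ) : ℝ :=
  ∑' δ : Fin ℓ → ℕ+,
    (∏ i, ((δ i : ℕ) : ℝ) ^ (α i - 1)) *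
      Real.exp (-(∏ i, ((δ i : ℕ) : ℝ)) * t)

/-- The staircase series `Z_m^{[ℓ]}(t) = Z^{[ℓ]}_{m,m-1,…,m-ℓ+1}(t)`. -/
def Zstair (ℓ : ℕ) (m : ℤ) (t : ℝ) : ℝ :=
  Zr ℓ (fun i => (m : ℝ) - (i : ℕ)) t

/-- The inverse function `(Z_ℓ^{[ℓ]})^{-1} : (0,∞) → (0,∞)`. -/
def ZstairInv (ℓ : ℕ) (u : ℝ) : ℝ :=
  Function.invFunOn (Zstair ℓ ℓ) (Set.Ioi 0) u

/-- The function `q_{ℓ,n}(y,u,θ)` from the saddle point analysis. -/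
def qfun (ℓ n : ℕ) (y u θ : ℝ) : ℂ :=
  Complex.I * (n : ℂ) * (θ : ℂ) - (y : ℂ) * ∑' δ : Fin ℓ → ℕ+,
    (∏ i, ((δ i : ℕ) : ℂ) ^ ((ℓ : ℤ) - 2 - (i : ℕ))) *
      Complex.exp (-(((∏ i, ((δ i : ℕ) : ℝ)) * u : ℝ) : ℂ)) *
      (Complex.exp (Complex.I * (((∏ i, ((δ i : ℕ) : ℝ)) * θ : ℝ) : ℂ)) - 1)

/-- The normalizing sequence `b_n = ((x K_ℓ)^{1/(2ℓ)}/√(ℓ(ℓ-1))) n^{(ℓ-1)/(2ℓ)}`. -/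
def bseq (ℓ : ℕ) (x : ℝ) (n : ℕ) : ℝ :=
  (x * Kconst ℓ) ^ ((1 : ℝ) / (2 * (ℓ : ℝ))) / Real.sqrt ((ℓ : ℝ) * ((ℓ : ℝ) - 1)) *
    (n : ℝ) ^ (((ℓ : ℝ) - 1) / (2 * (ℓ : ℝ)))

/-- The sequence `x_n = x e^{s/b_n}`. -/
def xseq (ℓ : ℕ) (x s : ℝ) (n : ℕ) : ℝ := x * Real.exp (s / bseq ℓ x n)

/-- The saddle point sequence `t_n = (Z_ℓ^{[ℓ]})^{-1}(n/x)`. -/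
def tseq (ℓ : ℕ) (x : ℝ) (n : ℕ) : ℝ := ZstairInv ℓ ((n : ℝ) / x)

end



/-- number of subgroups of index `m` -/
noncomputable def sc (G : Type) [Group G] (m : ℕ) : ℕ := Nat.card {L : Subgroup G // L.index = m}

lemma index_prod_eq {G : Type} [CommGroup G] (L : Subgroup (Multiplicative ℤ × G)) :
    L.index = (L.comap (MonoidHom.inr (Multiplicative ℤ) G)).index *
      (L.map (MonoidHom.fst (Multiplicative ℤ) G)).index := by
  have hr : (MonoidHom.inr (Multiplicative ℤ) G).range
      = (MonoidHom.fst (Multiplicative ℤ) G).ker := by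
    ext ⟨a, b⟩
    rw [MonoidHom.mem_range, MonoidHom.mem_ker]
    simp [Prod.ext_iff, eq_comm]
  have hs : (MonoidHom.fst (Multiplicative ℤ) G).range = ⊤ := by
    rw [MonoidHom.range_eq_top]; exact Prod.fst_surjective
  rw [Subgroup.index_map, Subgroup.index_comap, hr, hs, Subgroup.index_top, mul_one,
    ← Subgroup.relIndex_sup_left (K := L) (H := (MonoidHom.fst (Multiplicative ℤ) G).ker),
    Subgroup.relIndex_mul_index le_sup_left]

lemma index_zpowers_ofAdd (d : ℕ) :
    (Subgroup.zpowers (Multiplicative.ofAdd (d : ℤ))).index = d := by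
  have h : (AddSubgroup.zmultiples (d : ℤ)).index = d := by
    rw [Int.index_zmultiples]; simp
  conv_rhs => rw [← h]
  rfl

lemma eq_zpowers_of_index (M : Subgroup (Multiplicative ℤ)) :
    M = Subgroup.zpowers (Multiplicative.ofAdd (M.index : ℤ)) := by
  obtain ⟨k, hk⟩ := (Subgroup.isCyclic_iff_exists_zpowers_eq_top M).1 inferInstance
  have h1 : M = Subgroup.zpowers (Multiplicative.ofAdd ((k.toAdd.natAbs : ℕ) : ℤ)) := by
    rw [← hk]
    rcases Int.natAbs_eq k.toAdd with h | h
    · rw [← h]; rfl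
    · have : Multiplicative.ofAdd ((k.toAdd.natAbs : ℕ) : ℤ) = k⁻¹ := by
        have h2 : ((k.toAdd.natAbs : ℕ) : ℤ) = - k.toAdd := by omega
        rw [h2]; rfl
      rw [this, Subgroup.zpowers_inv]
  have h2 : M.index = k.toAdd.natAbs := by
    conv_lhs => rw [h1]
    exact index_zpowers_ofAdd _
  rw [h2]; exact h1

/-- the subgroup generated by `L'` and `(d,g)` -/
def phiSub {G : Type} [CommGroup G] (d : ℕ) (L : Subgroup G) (g : G) :
    Subgroup (Multiplicative ℤ × G) where
  carrier := {p | ∃ j : ℤ, p.1 = Multiplicative.ofAdd ((d : ℤ) * j) ∧ p.2 * g ^ (-j) ∈ L}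
  one_mem' := ⟨0, by simp, by simp⟩
  mul_mem' := by
    rintro ⟨a, b⟩ ⟨a', b'⟩ ⟨j, h1, h2⟩ ⟨j', h1', h2'⟩
    refine ⟨j + j', ?_, ?_⟩
    · simp only [Prod.mk_mul_mk] at *
      rw [h1, h1', mul_add]; rfl
    · simp only [Prod.mk_mul_mk] at *
      have := L.mul_mem h2 h2'
      have e : b * b' * g ^ (-(j + j')) = b * g ^ (-j) * (b' * g ^ (-j')) := by
        rw [neg_add, zpow_add]
        exact mul_mul_mul_comm _ _ _ _
      rwa [e]
  inv_mem' := by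
    rintro ⟨a, b⟩ ⟨j, h1, h2⟩
    refine ⟨-j, ?_, ?_⟩
    · simp only [Prod.inv_mk] at *
      rw [h1, mul_neg]; rfl
    · simp only [Prod.inv_mk] at *
      have := L.inv_mem h2
      have e : b⁻¹ * g ^ (- -j) = (b * g ^ (-j))⁻¹ := by
        rw [mul_inv, zpow_neg g (-j)]
      rwa [e]

lemma mem_phiSub {G : Type} [CommGroup G] (d : ℕ) (L : Subgroup G) (g : G)
    (p : Multiplicative ℤ × G) : p ∈ phiSub d L g ↔
      ∃ j : ℤ, p.1 = Multiplicative.ofAdd ((d : ℤ) * j) ∧ p.2 * g ^ (-j) ∈ L := Iff.rfl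

lemma phiSub_comap {G : Type} [CommGroup G] {d : ℕ} (hd : d ≠ 0) (L : Subgroup G) (g : G) :
    (phiSub d L g).comap (MonoidHom.inr (Multiplicative ℤ) G) = L := by
  ext h
  simp only [Subgroup.mem_comap, MonoidHom.inr_apply, mem_phiSub]
  constructor
  · rintro ⟨j, h1, h2⟩
    have h3 : (0 : ℤ) = (d : ℤ) * j := by
      exact congrArg Multiplicative.toAdd h1
    have : j = 0 := by
      rcases mul_eq_zero.1 h3.symm with h | h
      · exact absurd (by exact_mod_cast h) hd
      · exact h
    simpa [this] using h2
  · intro hh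
    exact ⟨0, by simp, by simpa using hh⟩

lemma phiSub_map {G : Type} [CommGroup G] {d : ℕ} (L : Subgroup G) (g : G) :
    (phiSub d L g).map (MonoidHom.fst (Multiplicative ℤ) G) =
      Subgroup.zpowers (Multiplicative.ofAdd (d : ℤ)) := by
  ext k
  simp only [Subgroup.mem_map, MonoidHom.coe_fst, mem_phiSub, Subgroup.mem_zpowers_iff]
  constructor
  · rintro ⟨p, ⟨j, h1, h2⟩, rfl⟩
    exact ⟨j, by rw [h1, ← ofAdd_zsmul]; simp [mul_comm]⟩
  · rintro ⟨j, rfl⟩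
    exact ⟨(_, g ^ j), ⟨j, by rw [← ofAdd_zsmul]; simp [mul_comm], by simp⟩, rfl⟩

lemma phiSub_index {G : Type} [CommGroup G] {d : ℕ} (hd : d ≠ 0) (L : Subgroup G) (g : G) :
    (phiSub d L g).index = d * L.index := by
  rw [index_prod_eq, phiSub_comap hd, phiSub_map, index_zpowers_ofAdd, mul_comm]

lemma phiSub_congr {G : Type} [CommGroup G] (d : ℕ) (L : Subgroup G) (g g' : G)
    (h : g⁻¹ * g' ∈ L) : phiSub d L g ≤ phiSub d L g' := by
  rintro p ⟨j, h1, h2⟩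
  refine ⟨j, h1, ?_⟩
  have := L.mul_mem h2 (L.zpow_mem h (-j))
  have e : p.2 * g ^ (-j) * (g⁻¹ * g') ^ (-j) = p.2 * g' ^ (-j) := by
    rw [mul_zpow, inv_zpow, mul_assoc]; simp
  rwa [e] at this

lemma phiSub_self_mem {G : Type} [CommGroup G] (d : ℕ) (L : Subgroup G) (g : G) :
    (Multiplicative.ofAdd (d : ℤ), g) ∈ phiSub d L g := ⟨1, by simp, by simp⟩

lemma phiSub_surj {G : Type} [CommGroup G] (M : Subgroup (Multiplicative ℤ × G)) (d : ℕ) (g : G)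
    (hd : M.map (MonoidHom.fst (Multiplicative ℤ) G)
      = Subgroup.zpowers (Multiplicative.ofAdd (d : ℤ)))
    (hg : (Multiplicative.ofAdd (d : ℤ), g) ∈ M) :
    phiSub d (M.comap (MonoidHom.inr (Multiplicative ℤ) G)) g = M := by
  have key : ∀ (p : Multiplicative ℤ × G) (j : ℤ), p.1 = Multiplicative.ofAdd ((d : ℤ) * j) →
      p * (Multiplicative.ofAdd (d : ℤ), g) ^ (-j) = (1, p.2 * g ^ (-j)) := by
    rintro ⟨a, b⟩ j h
    simp only at h
    rw [Prod.pow_mk, Prod.mk_mul_mk, h, ← ofAdd_zsmul, ← ofAdd_add]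
    simp [mul_comm]
  ext p
  rw [mem_phiSub]
  constructor
  · rintro ⟨j, h1, h2⟩
    rw [Subgroup.mem_comap, MonoidHom.inr_apply, ← key p j h1] at h2
    exact (Subgroup.mul_mem_cancel_right M (M.zpow_mem hg _)).1 h2
  · intro hp
    have : p.1 ∈ M.map (MonoidHom.fst (Multiplicative ℤ) G) := ⟨p, hp, rfl⟩
    rw [hd, Subgroup.mem_zpowers_iff] at this
    obtain ⟨j, hj⟩ := this
    have h1 : p.1 = Multiplicative.ofAdd ((d : ℤ) * j) := by
      rw [← hj, ← ofAdd_zsmul]; simp [mul_comm]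
    refine ⟨j, h1, ?_⟩
    rw [Subgroup.mem_comap, MonoidHom.inr_apply, ← key p j h1]
    exact M.mul_mem hp (M.zpow_mem hg _)

/-- parametrization -/
noncomputable def PhiMap (G : Type) [CommGroup G] (m : ℕ) (hm : m ≠ 0) :
    (Σ p : {p : ℕ × ℕ // p ∈ Nat.divisorsAntidiagonal m},
      Σ L : {L : Subgroup G // L.index = p.1.2}, G ⧸ L.1) →
    {L : Subgroup (Multiplicative ℤ × G) // L.index = m} :=
  fun q => ⟨phiSub q.1.1.1 q.2.1.1 (Quotient.out q.2.2), by
    have h := Nat.mem_divisorsAntidiagonal.1 q.1.2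
    rw [phiSub_index (by rintro h0; rw [h0, zero_mul] at h; exact h.2 h.1.symm), q.2.1.2, h.1]⟩

lemma PhiMap_bij (G : Type) [CommGroup G] (m : ℕ) (hm : m ≠ 0) :
    Function.Bijective (PhiMap G m hm) := by
  constructor
  · rintro ⟨⟨⟨d, r⟩, hp⟩, ⟨L, hL⟩, g⟩ ⟨⟨⟨d', r'⟩, hp'⟩, ⟨L', hL'⟩, g'⟩ h
    have h := congrArg Subtype.val h
    simp only [PhiMap] at h
    have h1 := Nat.mem_divisorsAntidiagonal.1 hp
    have h1' := Nat.mem_divisorsAntidiagonal.1 hp'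
    simp only at h1 h1' hL hL'
    have hd : d ≠ 0 := by rintro rfl; simp at h1; omega
    have hd' : d' ≠ 0 := by rintro rfl; simp at h1'; omega
    have hLL : L = L' := by
      rw [← phiSub_comap hd L (Quotient.out g), h, phiSub_comap hd']
    have hdd : d = d' := by
      rw [← index_zpowers_ofAdd d, ← phiSub_map (d := d) L (Quotient.out g), h, phiSub_map,
        index_zpowers_ofAdd]
    subst hLL hdd
    have hrr : r = r' := by rw [← hL, ← hL']
    subst hrr
    have hgg : g = g' := by
      have h2 := phiSub_self_mem d L (Quotient.out g)
      rw [h] at h2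
      obtain ⟨j, h3, h4⟩ := h2
      have h5 : (d : ℤ) = (d : ℤ) * j := by
        exact congrArg Multiplicative.toAdd h3
      have hj : j = 1 := by
        have : (d : ℤ) * (j - 1) = 0 := by linarith
        rcases mul_eq_zero.1 this with h | h
        · exact absurd (by exact_mod_cast h) hd
        · omega
      rw [hj] at h4
      rw [← Quotient.out_eq g, ← Quotient.out_eq g']
      apply Eq.symm
      refine (QuotientGroup.eq (s := L)).2 ?_
      simpa [mul_comm] using h4
    rw [hgg]
  · rintro ⟨M, hM⟩
    set d := (M.map (MonoidHom.fst (Multiplicative ℤ) G)).index with hd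
    set L := M.comap (MonoidHom.inr (Multiplicative ℤ) G) with hL
    have hmap := eq_zpowers_of_index (M.map (MonoidHom.fst (Multiplicative ℤ) G))
    rw [← hd] at hmap
    have hmem : Multiplicative.ofAdd (d : ℤ) ∈ M.map (MonoidHom.fst (Multiplicative ℤ) G) := by
      rw [hmap]; exact Subgroup.mem_zpowers _
    obtain ⟨⟨k, g⟩, hg, hk⟩ := hmem
    simp only [MonoidHom.coe_fst] at hk
    subst hk
    have hidx := index_prod_eq M
    rw [hM, ← hd, ← hL] at hidx
    refine ⟨⟨⟨(d, L.index), ?_⟩, ⟨L, rfl⟩, (QuotientGroup.mk g : G ⧸ L)⟩, ?_⟩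
    · rw [Nat.mem_divisorsAntidiagonal]; exact ⟨by rw [hidx, mul_comm], hm⟩
    · apply Subtype.ext
      simp only [PhiMap]
      rw [← phiSub_surj M d g hmap hg, ← hL]
      have h6 : (Quotient.out (QuotientGroup.mk g : G ⧸ L))⁻¹ * g ∈ L := by
        rw [← QuotientGroup.eq]; exact Quotient.out_eq _
      apply le_antisymm
      · exact phiSub_congr _ _ _ _ h6
      · apply phiSub_congr
        have := L.inv_mem h6
        simpa using this

lemma sc_prod (G : Type) [CommGroup G]
    (hfin : ∀ m, m ≠ 0 → Finite {L : Subgroup G // L.index = m}) (m : ℕ) (hm : m ≠ 0) :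
    Finite {L : Subgroup (Multiplicative ℤ × G) // L.index = m} ∧
    sc (Multiplicative ℤ × G) m = ∑ p ∈ Nat.divisorsAntidiagonal m, p.2 * sc G p.2 := by
  have hne : ∀ p : {p : ℕ × ℕ // p ∈ Nat.divisorsAntidiagonal m}, p.1.2 ≠ 0 := by
    rintro ⟨p, hp⟩ h0
    have h := Nat.mem_divisorsAntidiagonal.1 hp
    simp only at h0
    rw [h0, mul_zero] at h; exact h.2 h.1.symm
  have f1 : ∀ p : {p : ℕ × ℕ // p ∈ Nat.divisorsAntidiagonal m},
    Finite {L : Subgroup G // L.index = p.1.2} := fun p => hfin _ (hne p)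
  have f2 : ∀ p : {p : ℕ × ℕ // p ∈ Nat.divisorsAntidiagonal m},
    ∀ L : {L : Subgroup G // L.index = p.1.2}, Finite (G ⧸ L.1) := fun p L =>
      Nat.finite_of_card_ne_zero (by
        have := L.2
        unfold Subgroup.index at this
        rw [this]; exact hne p)
  let e := Equiv.ofBijective _ (PhiMap_bij G m hm)
  refine ⟨Finite.of_equiv _ e, ?_⟩
  unfold sc
  rw [← Nat.card_congr e, Nat.card_sigma,
    ← Finset.sum_coe_sort (Nat.divisorsAntidiagonal m) (fun p => p.2 * Nat.card {L : Subgroup G // L.index = p.2})]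
  refine Finset.sum_congr rfl fun p _ => ?_
  have := f1 p
  have := Fintype.ofFinite {L : Subgroup G // L.index = p.1.2}
  rw [Nat.card_sigma]
  have : ∀ L : {L : Subgroup G // L.index = p.1.2}, Nat.card (G ⧸ L.1) = p.1.2 := fun L => L.2
  simp only [this, Finset.sum_const, Finset.card_univ, smul_eq_mul, Nat.card_eq_fintype_card,
    mul_comm]

/-- isomorphism invariance -/
def subEquiv {G H : Type} [Group G] [Group H] (e : G ≃* H) (m : ℕ) :
    {L : Subgroup G // L.index = m} ≃ {L : Subgroup H // L.index = m} :=
  (e.mapSubgroup.toEquiv).subtypeEquiv (fun L => by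
    show L.index = m ↔ (L.map e.toMonoidHom).index = m
    rw [show (L.map e.toMonoidHom).index = L.index from Subgroup.index_map_equiv L e])

/-- cons iso -/
def consIso (ℓ : ℕ) : (Multiplicative ℤ × (Fin ℓ → Multiplicative ℤ)) ≃*
    (Fin (ℓ + 1) → Multiplicative ℤ) where
  toFun p := Fin.cons p.1 p.2
  invFun f := (f 0, fun i => f i.succ)
  left_inv := by rintro ⟨a, b⟩; simp
  right_inv f := by
    ext i; refine Fin.cases ?_ (fun i => ?_) i <;> simp
  map_mul' := by
    rintro ⟨a, b⟩ ⟨c, d⟩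
    funext i; refine Fin.cases ?_ (fun i => ?_) i <;> simp

/-- number of sublattices of `ℤ^ℓ` of index `m` -/
noncomputable def lat (ℓ m : ℕ) : ℕ := sc (Fin ℓ → Multiplicative ℤ) m

lemma lat_finite (ℓ : ℕ) : ∀ m, m ≠ 0 →
    Finite {L : Subgroup (Fin ℓ → Multiplicative ℤ) // L.index = m} := by
  induction ℓ with
  | zero => intro m _; infer_instance
  | succ ℓ ih =>
    intro m hm
    have := (sc_prod (Fin ℓ → Multiplicative ℤ) ih m hm).1
    exact Finite.of_equiv _ (subEquiv (consIso ℓ) m)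

lemma lat_succ (ℓ m : ℕ) (hm : m ≠ 0) :
    lat (ℓ + 1) m = ∑ p ∈ Nat.divisorsAntidiagonal m, p.2 * lat ℓ p.2 := by
  rw [show lat (ℓ+1) m = sc (Multiplicative ℤ × (Fin ℓ → Multiplicative ℤ)) m from
    (Nat.card_congr (subEquiv (consIso ℓ) m)).symm]
  exact (sc_prod (Fin ℓ → Multiplicative ℤ) (lat_finite ℓ) m hm).2

lemma lat_zero (m : ℕ) : lat 0 m = if m = 1 then 1 else 0 := by
  unfold lat sc
  have h : ∀ L : Subgroup (Fin 0 → Multiplicative ℤ), L.index = 1 := by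
    intro L
    rw [Subgroup.index_eq_one]; exact Subsingleton.elim _ _
  split_ifs with hm
  · subst hm
    rw [Nat.card_eq_one_iff_unique]
    refine ⟨⟨fun a b => Subtype.ext (Subsingleton.elim _ _)⟩, ⟨⟨⊤, h _⟩⟩⟩
  · have : IsEmpty {L : Subgroup (Fin 0 → Multiplicative ℤ) // L.index = m} :=
      ⟨fun L => hm (by rw [← L.2, h])⟩
    exact Nat.card_of_isEmpty


/-- orbit relation of an action -/
def homSetoid {G X : Type} [Group G] (φ : G →* Equiv.Perm X) : Setoid X where
  r x y := ∃ g, φ g x = y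
  iseqv := ⟨fun x => ⟨1, by simp⟩, fun {x y} ⟨g, h⟩ => ⟨g⁻¹, by rw [← h]; simp⟩,
    fun {x y z} ⟨g, h⟩ ⟨g', h'⟩ => ⟨g' * g, by rw [← h', ← h]; simp⟩⟩

/-- number of orbits -/
noncomputable def homOrb {G X : Type} [Group G] (φ : G →* Equiv.Perm X) : ℕ :=
  Nat.card (Quotient (homSetoid φ))

/-- `e` is an orbit map -/
def IsOrb {G X : Type} [Group G] (L : Subgroup G) (e : G ⧸ L ↪ X) (φ : G →* Equiv.Perm X) : Prop :=
  ∀ g h : G, φ g (e (QuotientGroup.mk h)) = e (QuotientGroup.mk (g * h))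

lemma IsOrb.notmem {G X : Type} [Group G] {L : Subgroup G} {e : G ⧸ L ↪ X} {φ : G →* Equiv.Perm X}
    (h : IsOrb L e φ) (g : G) (x : X) : (φ g x ∉ Set.range e) ↔ x ∉ Set.range e := by
  rw [not_iff_not]
  constructor
  · rintro ⟨q, hq⟩
    induction q using QuotientGroup.induction_on with
    | H z =>
      refine ⟨QuotientGroup.mk (g⁻¹ * z), ?_⟩
      rw [← h, hq]; simp
  · rintro ⟨q, rfl⟩
    induction q using QuotientGroup.induction_on with
    | H z => exact ⟨_, (h g z).symm⟩

/-- restriction to the complement -/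
def resHom {G X : Type} [Group G] {L : Subgroup G} {e : G ⧸ L ↪ X} {φ : G →* Equiv.Perm X}
    (h : IsOrb L e φ) : G →* Equiv.Perm {x : X // x ∉ Set.range e} where
  toFun g := (φ g).subtypePerm (fun x => h.notmem g x)
  map_one' := by ext; simp
  map_mul' a b := by
    ext x
    show φ (a * b) x.1 = φ a (φ b x.1)
    simp

/-- extension from the complement -/
noncomputable def extHom {G X : Type} [Group G] (L : Subgroup G) (e : G ⧸ L ↪ X)
    (ψ : G →* Equiv.Perm {x : X // x ∉ Set.range e}) : G →* Equiv.Perm X :=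
  haveI : DecidablePred (fun x => x ∈ Set.range e) := Classical.decPred _
  (Equiv.Perm.subtypeCongrHom (fun x => x ∈ Set.range e)).comp
    (MonoidHom.prod (((Equiv.ofInjective e e.injective).permCongrHom).toMonoidHom.comp
      (MulAction.toPermHom G (G ⧸ L))) ψ)

lemma extHom_out {G X : Type} [Group G] (L : Subgroup G) (e : G ⧸ L ↪ X)
    (ψ : G →* Equiv.Perm {x : X // x ∉ Set.range e}) (g : G) (x : {x : X // x ∉ Set.range e}) :
    extHom L e ψ g x.1 = (ψ g x).1 := by
  classical
  simp only [extHom, MonoidHom.comp_apply]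
  exact Equiv.Perm.subtypeCongr.right_apply _ _ x.2

lemma extHom_in {G X : Type} [Group G] (L : Subgroup G) (e : G ⧸ L ↪ X)
    (ψ : G →* Equiv.Perm {x : X // x ∉ Set.range e}) : IsOrb L e (extHom L e ψ) := by
  classical
  intro g h
  simp only [extHom, MonoidHom.comp_apply]
  refine (Equiv.Perm.subtypeCongr.left_apply _ _ (Set.mem_range_self _)).trans ?_
  have : (⟨e (QuotientGroup.mk h), Set.mem_range_self _⟩ : Set.range e)
    = Equiv.ofInjective e e.injective (QuotientGroup.mk h) := rfl
  rw [this]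
  simp

/-- restriction equivalence -/
noncomputable def resEquiv {G X : Type} [Group G] (L : Subgroup G) (e : G ⧸ L ↪ X) :
    {φ : G →* Equiv.Perm X // IsOrb L e φ} ≃ (G →* Equiv.Perm {x : X // x ∉ Set.range e}) where
  toFun φ := resHom φ.2
  invFun ψ := ⟨extHom L e ψ, extHom_in L e ψ⟩
  left_inv := by
    rintro ⟨φ, h⟩
    apply Subtype.ext
    ext g x
    by_cases hx : x ∈ Set.range e
    · obtain ⟨q, rfl⟩ := hx
      induction q using QuotientGroup.induction_on with
      | H z => 
        show extHom L e (resHom h) g _ = φ g _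
        rw [h, extHom_in]
    · exact extHom_out L e _ g ⟨x, hx⟩
  right_inv ψ := by
    ext g x
    exact extHom_out L e _ g x

lemma homOrb_res {G X : Type} [Finite X] [Group G] {L : Subgroup G} {e : G ⧸ L ↪ X}
    {φ : G →* Equiv.Perm X} (h : IsOrb L e φ) : homOrb φ = homOrb (resHom h) + 1 := by
  unfold homOrb
  rw [← Finite.card_option]
  symm
  let F : Option (Quotient (homSetoid (resHom h))) → Quotient (homSetoid φ) := fun o =>
    o.elim (Quotient.mk (homSetoid φ) (e (QuotientGroup.mk 1)))
      (Quotient.map' (fun y => y.1) (by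
        rintro a b ⟨g, hg⟩
        exact ⟨g, by rw [← hg]; rfl⟩))
  refine Nat.card_congr (Equiv.ofBijective F ⟨?_, ?_⟩)
  · have key : ∀ y : {x : X // x ∉ Set.range e},
        F none ≠ F (some (Quotient.mk _ y)) := by
      intro y hy
      obtain ⟨g, hg⟩ := Quotient.exact hy
      rw [h] at hg
      exact y.2 ⟨_, hg⟩
    rintro (_ | a) (_ | b) hab
    · rfl
    · induction b using Quotient.inductionOn with
      | h y => exact absurd hab (key y)
    · induction a using Quotient.inductionOn with
      | h y => exact absurd hab.symm (key y)
    · induction a using Quotient.inductionOn with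
      | h a =>
      induction b using Quotient.inductionOn with
      | h b =>
        obtain ⟨g, hg⟩ := Quotient.exact hab
        congr 1
        apply Quotient.sound
        exact ⟨g, Subtype.ext hg⟩
  · intro q
    induction q using Quotient.inductionOn with
    | h x =>
      by_cases hx : x ∈ Set.range e
      · obtain ⟨q, rfl⟩ := hx
        induction q using QuotientGroup.induction_on with
        | H z => 
          refine ⟨none, Quotient.sound ⟨z, ?_⟩⟩
          rw [h, mul_one]
      · exact ⟨some (Quotient.mk _ ⟨x, hx⟩), rfl⟩

/-- number of actions on `Fin n` with `k` orbits -/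
noncomputable def homCount (G : Type) [Group G] (n k : ℕ) : ℕ :=
  Nat.card {φ : G →* Equiv.Perm (Fin n) // homOrb φ = k}

lemma homCount_congr {G X : Type} [Group G] {n : ℕ} (e : X ≃ Fin n) (k : ℕ) :
    Nat.card {φ : G →* Equiv.Perm X // homOrb φ = k} = homCount G n k := by
  let c := e.permCongrHom
  refine Nat.card_congr ((Equiv.subtypeEquiv (p := fun φ => homOrb φ = k)
    (MulEquiv.monoidHomCongrRightEquiv c)) ?_)
  intro φ
  have : homOrb φ = homOrb (MulEquiv.monoidHomCongrRightEquiv c φ) := by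
    unfold homOrb
    refine Nat.card_congr (Quotient.congr e ?_)
    intro a b
    show (∃ g, φ g a = b) ↔ ∃ g, e (φ g (e.symm (e a))) = e b
    simp
  simp only [this]

lemma card_orb_fiber {G : Type} [Group G] {n m : ℕ} (L : Subgroup G) (hL : L.index = m) (hm : m ≠ 0)
    (e : G ⧸ L ↪ Fin n) (k : ℕ) :
    Nat.card {φ : G →* Equiv.Perm (Fin n) // IsOrb L e φ ∧ homOrb φ = k + 1}
      = homCount G (n - m) k := by
  have hcard : Nat.card {x : Fin n // x ∉ Set.range e} = n - m := by
    classical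
    have h1 : Nat.card (Set.range e) = m := by
      rw [Nat.card_congr (Equiv.ofInjective e e.injective).symm]; exact hL
    have h2 : Nat.card {x : Fin n // x ∈ Set.range e} + Nat.card {x : Fin n // x ∉ Set.range e}
        = n := by
      rw [← Nat.card_sum, Nat.card_congr (Equiv.sumCompl (fun x => x ∈ Set.range e))]
      simp
    have h3 : Nat.card {x : Fin n // x ∈ Set.range e} = m := h1
    omega
  have e1 : {x : Fin n // x ∉ Set.range e} ≃ Fin (n - m) := by
    rw [← hcard]; exact Finite.equivFin _
  rw [← homCount_congr e1 k]
  refine Nat.card_congr ((Equiv.subtypeSubtypeEquivSubtypeInter (IsOrb L e)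
    (fun φ => homOrb φ = k + 1)).symm.trans
      ((resEquiv L e).subtypeEquiv ?_))
  rintro ⟨φ, h⟩
  show homOrb φ = k + 1 ↔ homOrb (resHom h) = k
  rw [homOrb_res h]; omega

lemma orb_bij {G : Type} [Group G] (n k : ℕ) : Function.Bijective
    (fun q : (Σ m : {m : ℕ // m ∈ Finset.Icc 1 n}, Σ L : {L : Subgroup G // L.index = m.1},
      Σ e : (G ⧸ L.1 ↪ Fin n), {φ : G →* Equiv.Perm (Fin n) // IsOrb L.1 e φ ∧ homOrb φ = k + 1}) =>
      ((⟨q.2.2.2.1, q.2.2.2.2.2⟩, q.2.2.1 (QuotientGroup.mk 1)) :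
        {φ : G →* Equiv.Perm (Fin n) // homOrb φ = k + 1} × Fin n)) := by
  constructor
  · rintro ⟨⟨m, hm⟩, ⟨L, hL⟩, e, φ, h1, h2⟩ ⟨⟨m', hm'⟩, ⟨L', hL'⟩, e', φ', h1', h2'⟩ h
    simp only [Prod.mk.injEq, Subtype.mk.injEq] at h
    obtain ⟨rfl, hp⟩ := h
    have key : ∀ {L : Subgroup G} {e : G ⧸ L ↪ Fin n} (_ : IsOrb L e φ) (g : G),
        g ∈ L ↔ φ g (e (QuotientGroup.mk 1)) = e (QuotientGroup.mk 1) := by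
      intro L e h1 g
      rw [h1, e.injective.eq_iff, eq_comm, QuotientGroup.eq]; simp
    have hLL : L = L' := by
      ext g
      rw [key h1 g, key h1' g, hp]
    subst hLL
    simp only at hL hL'
    subst hL hL'
    have he : e = e' := by
      ext q
      induction q using QuotientGroup.induction_on with
      | H z =>
        have a1 := h1 z 1
        have a2 := h1' z 1
        rw [mul_one] at a1 a2
        rw [← a1, ← a2, hp]
    subst he
    rfl
  · rintro ⟨⟨φ, hφ⟩, p⟩
    let L : Subgroup G := (MulAction.stabilizer (Equiv.Perm (Fin n)) p).comap φ
    have hmem : ∀ a b : G, a⁻¹ * b ∈ L ↔ φ a p = φ b p := by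
      intro a b
      show φ (a⁻¹ * b) p = p ↔ _
      rw [map_mul, map_inv, Equiv.Perm.mul_apply, Equiv.Perm.inv_eq_iff_eq]
      exact eq_comm
    let e : G ⧸ L ↪ Fin n := ⟨fun q => Quotient.liftOn' q (fun g => φ g p) (by
      intro a b hab
      rw [QuotientGroup.leftRel_apply] at hab
      exact (hmem a b).1 hab), by
      intro a b hab
      induction a using QuotientGroup.induction_on with
      | H a =>
      induction b using QuotientGroup.induction_on with
      | H b =>
        rw [QuotientGroup.eq, hmem]
        exact hab⟩
    have : Finite (G ⧸ L) := Finite.of_injective e e.injective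
    have hidx : L.index ∈ Finset.Icc 1 n := by
      rw [Finset.mem_Icc]
      constructor
      · exact Nat.one_le_iff_ne_zero.2 (Nat.card_pos (α := G ⧸ L)).ne'
      · have := Nat.card_le_card_of_injective e e.injective
        simpa [Subgroup.index] using this
    have ho : IsOrb L e φ := by
      intro g h
      show φ g (φ h p) = φ (g * h) p
      simp
    refine ⟨⟨⟨L.index, hidx⟩, ⟨L, rfl⟩, e, φ, ho, hφ⟩, ?_⟩
    simp only [Prod.mk.injEq, true_and]
    show φ 1 p = p
    simp

lemma homCount_rec (G : Type) [Group G] (hG : ∀ n, Finite (G →* Equiv.Perm (Fin n)))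
    (hfin : ∀ m, m ≠ 0 → Finite {L : Subgroup G // L.index = m}) (n k : ℕ) :
    n * homCount G n (k + 1) = ∑ m ∈ Finset.Icc 1 n,
      sc G m * (n.descFactorial m * homCount G (n - m) k) := by
  have h := Nat.card_congr (Equiv.ofBijective _ (orb_bij (G := G) n k))
  have hne : ∀ m : {m : ℕ // m ∈ Finset.Icc 1 n}, m.1 ≠ 0 := by
    rintro ⟨m, hm⟩; rw [Finset.mem_Icc] at hm; simp only; omega
  have f0 := hG n
  have f1 : ∀ m : {m : ℕ // m ∈ Finset.Icc 1 n}, Finite {L : Subgroup G // L.index = m.1} :=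
    fun m => hfin _ (hne m)
  have f2 : ∀ m : {m : ℕ // m ∈ Finset.Icc 1 n}, ∀ L : {L : Subgroup G // L.index = m.1},
      Finite (G ⧸ L.1) := fun m L => Nat.finite_of_card_ne_zero (by
        have := L.2
        unfold Subgroup.index at this
        rw [this]; exact hne m)
  rw [Nat.card_sigma, Nat.card_prod, Nat.card_eq_fintype_card (α := Fin n), Fintype.card_fin] at h
  change _ = homCount G n (k+1) * n at h
  rw [mul_comm, ← h, ← Finset.sum_coe_sort (Finset.Icc 1 n)
    (fun m => sc G m * (n.descFactorial m * homCount G (n - m) k))]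
  refine Finset.sum_congr rfl fun m _ => ?_
  have := f1 m
  have := Fintype.ofFinite {L : Subgroup G // L.index = m.1}
  rw [Nat.card_sigma]
  have inner : ∀ L : {L : Subgroup G // L.index = m.1},
      Nat.card (Σ e : (G ⧸ L.1 ↪ Fin n), {φ : G →* Equiv.Perm (Fin n) //
        IsOrb L.1 e φ ∧ homOrb φ = k + 1}) = n.descFactorial m.1 * homCount G (n - m.1) k := by
    intro L
    have := f2 m L
    have := Fintype.ofFinite (G ⧸ L.1)
    classical
    rw [Nat.card_sigma]
    simp only [card_orb_fiber L.1 L.2 (hne m)]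
    rw [Finset.sum_const, Finset.card_univ, Fintype.card_embedding_eq, smul_eq_mul,
      Fintype.card_fin]
    congr 2
    rw [← Nat.card_eq_fintype_card]
    exact L.2
  simp only [inner, Finset.sum_const, Finset.card_univ, smul_eq_mul]
  unfold sc
  rw [Nat.card_eq_fintype_card]

/-- tuples and homs -/
def tupOf {ℓ n : ℕ} (φ : (Fin ℓ → Multiplicative ℤ) →* Equiv.Perm (Fin n)) :
    Fin ℓ → Equiv.Perm (Fin n) := fun i => φ (Pi.mulSingle i (Multiplicative.ofAdd 1))

lemma tupOf_inj {ℓ n : ℕ} : Function.Injective (tupOf (ℓ := ℓ) (n := n)) := by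
  intro φ ψ h
  apply MonoidHom.pi_ext
  intro i x
  have hx : (Pi.mulSingle i x : Fin ℓ → Multiplicative ℤ)
      = (Pi.mulSingle i (Multiplicative.ofAdd 1)) ^ (x.toAdd) := by
    rw [← Pi.mulSingle_zpow, ← ofAdd_zsmul]; simp
  rw [hx, map_zpow, map_zpow]
  exact congrArg (· ^ _) (congrFun h i)

lemma tupOf_comm {ℓ n : ℕ} (φ : (Fin ℓ → Multiplicative ℤ) →* Equiv.Perm (Fin n)) (i j : Fin ℓ) :
    tupOf φ i * tupOf φ j = tupOf φ j * tupOf φ i := by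
  unfold tupOf
  rw [← map_mul, ← map_mul, mul_comm]

lemma tupOf_surj {ℓ n : ℕ} (σ : Fin ℓ → Equiv.Perm (Fin n)) (h : ∀ i j, σ i * σ j = σ j * σ i) :
    ∃ φ : (Fin ℓ → Multiplicative ℤ) →* Equiv.Perm (Fin n), tupOf φ = σ := by
  have hc : Pairwise fun i j => ∀ x y : Multiplicative ℤ,
      Commute (zpowersHom (Equiv.Perm (Fin n)) (σ i) x) (zpowersHom _ (σ j) y) := by
    intro i j _ x y
    have h2 : Commute (σ i) (σ j) := (commute_iff_eq _ _).2 (h i j)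
    rw [zpowersHom_apply, zpowersHom_apply]
    exact (h2.zpow_zpow _ _)
  refine ⟨MonoidHom.noncommPiCoprod (fun i => zpowersHom _ (σ i)) hc, ?_⟩
  funext i
  unfold tupOf
  refine (MonoidHom.noncommPiCoprod_mulSingle _ _ _).trans ?_
  simp

lemma range_tup {ℓ n : ℕ} (φ : (Fin ℓ → Multiplicative ℤ) →* Equiv.Perm (Fin n)) :
    Subgroup.closure (Set.range (tupOf φ)) = φ.range := by
  apply le_antisymm
  · rw [Subgroup.closure_le]
    rintro _ ⟨i, rfl⟩
    exact ⟨_, rfl⟩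
  · rintro _ ⟨v, rfl⟩
    have hv : v = ∏ i, (Pi.mulSingle i (Multiplicative.ofAdd 1) : Fin ℓ → Multiplicative ℤ) ^
        ((v i).toAdd) := by
      conv_lhs => rw [← Finset.univ_prod_mulSingle v]
      refine Finset.prod_congr rfl fun i _ => ?_
      rw [← Pi.mulSingle_zpow, ← ofAdd_zsmul]; simp
    have h2 : (Subgroup.closure (Set.range (tupOf φ))).comap φ = ⊤ := by
      rw [eq_top_iff]
      intro v _
      have hv : v = ∏ i, (Pi.mulSingle i (Multiplicative.ofAdd 1) : Fin ℓ → Multiplicative ℤ) ^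
          ((v i).toAdd) := by
        conv_lhs => rw [← Finset.univ_prod_mulSingle v]
        refine Finset.prod_congr rfl fun i _ => ?_
        rw [← Pi.mulSingle_zpow, ← ofAdd_zsmul]; simp
      rw [hv]
      refine Subgroup.prod_mem _ fun i _ => Subgroup.zpow_mem _ ?_ _
      exact Subgroup.subset_closure ⟨i, rfl⟩
    have : v ∈ (Subgroup.closure (Set.range (tupOf φ))).comap φ := by rw [h2]; trivial
    exact this

lemma kappa_tup {ℓ n : ℕ} (φ : (Fin ℓ → Multiplicative ℤ) →* Equiv.Perm (Fin n)) :
    kappa (tupOf φ) = homOrb φ := by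
  unfold kappa homOrb
  rw [range_tup]
  refine Nat.card_congr (Quotient.congr (Equiv.refl _) ?_)
  intro a b
  rw [MulAction.orbitRel_apply]
  constructor
  · rintro ⟨⟨_, g, rfl⟩, h⟩
    exact ⟨g⁻¹, by rw [map_inv, Equiv.Perm.inv_eq_iff_eq]; exact h.symm⟩
  · rintro ⟨g, h⟩
    refine ⟨⟨φ g⁻¹, g⁻¹, rfl⟩, ?_⟩
    show φ g⁻¹ b = a
    rw [map_inv, Equiv.Perm.inv_eq_iff_eq]; exact h.symm

lemma Acount_eq (ℓ n k : ℕ) : Acount ℓ n k = homCount (Fin ℓ → Multiplicative ℤ) n k := by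
  symm
  refine Nat.card_congr (Equiv.ofBijective
    (fun φ => ⟨tupOf φ.1, tupOf_comm φ.1, by rw [kappa_tup]; exact φ.2⟩) ⟨?_, ?_⟩)
  · intro a b h
    exact Subtype.ext (tupOf_inj (congrArg Subtype.val h))
  · rintro ⟨σ, h1, h2⟩
    obtain ⟨φ, rfl⟩ := tupOf_surj σ h1
    exact ⟨⟨φ, by rw [← kappa_tup]; exact h2⟩, rfl⟩

lemma Acount_rec (ℓ n k : ℕ) :
    n * Acount ℓ n (k + 1) = ∑ m ∈ Finset.Icc 1 n,
      lat ℓ m * (n.descFactorial m * Acount ℓ (n - m) k) := by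
  simp only [Acount_eq]
  exact homCount_rec _ (fun n => Finite.of_injective _ (tupOf_inj (ℓ := ℓ) (n := n)))
    (lat_finite ℓ) n k

lemma kappa_le {ℓ n : ℕ} (σ : Fin ℓ → Equiv.Perm (Fin n)) : kappa σ ≤ n := by
  have := Nat.card_le_card_of_surjective
    (Quotient.mk (MulAction.orbitRel (Subgroup.closure (Set.range σ)) (Fin n)))
    Quotient.mk_surjective
  simpa [kappa] using! this

lemma Acount_gt (ℓ n k : ℕ) (h : n < k) : Acount ℓ n k = 0 := by
  have : IsEmpty {σ : Fin ℓ → Equiv.Perm (Fin n) //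
    (∀ i j, σ i * σ j = σ j * σ i) ∧ kappa σ = k} := ⟨fun s => by
      have := kappa_le s.1
      rw [s.2.2] at this; omega⟩
  exact Nat.card_of_isEmpty

lemma Acount_zero_right (ℓ n : ℕ) (h : n ≠ 0) : Acount ℓ n 0 = 0 := by
  have : IsEmpty {σ : Fin ℓ → Equiv.Perm (Fin n) //
    (∀ i j, σ i * σ j = σ j * σ i) ∧ kappa σ = 0} := ⟨fun s => by
      have h1 := s.2.2
      unfold kappa at h1
      have : NeZero n := ⟨h⟩
      have : Nonempty (MulAction.orbitRel.Quotient (Subgroup.closure (Set.range s.1)) (Fin n)) :=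
        ⟨Quotient.mk _ (0 : Fin n)⟩
      exact (Nat.card_pos.ne') h1⟩
  exact Nat.card_of_isEmpty

lemma Acount_zero_zero (ℓ : ℕ) : Acount ℓ 0 0 = 1 := by
  unfold Acount
  rw [Nat.card_eq_one_iff_unique]
  refine ⟨⟨fun a b => Subtype.ext (Subsingleton.elim _ _)⟩, ⟨⟨fun _ => 1, fun i j => rfl, ?_⟩⟩⟩
  have := kappa_le (fun _ : Fin ℓ => (1 : Equiv.Perm (Fin 0)))
  omega


/-- arithmetic function version -/
noncomputable def latA (ℓ : ℕ) : ArithmeticFunction ℕ :=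
  ⟨fun m => if m = 0 then 0 else lat ℓ m, by simp⟩

lemma latA_apply (ℓ m : ℕ) (hm : m ≠ 0) : latA ℓ m = lat ℓ m := by
  show (if m = 0 then 0 else lat ℓ m) = _
  rw [if_neg hm]

lemma latA_succ (ℓ : ℕ) : latA (ℓ + 1) = ArithmeticFunction.zeta *
    (ArithmeticFunction.pmul ArithmeticFunction.id (latA ℓ)) := by
  ext m
  by_cases hm : m = 0
  · subst hm; simp
  rw [latA_apply _ _ hm, lat_succ _ _ hm, ArithmeticFunction.mul_apply]
  refine Finset.sum_congr rfl fun p hp => ?_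
  have h := Nat.mem_divisorsAntidiagonal.1 hp
  have h1 : p.1 ≠ 0 := by intro h0; rw [h0, zero_mul] at h; exact h.2 h.1.symm
  have h2 : p.2 ≠ 0 := by intro h0; rw [h0, mul_zero] at h; exact h.2 h.1.symm
  rw [ArithmeticFunction.zeta_apply_ne h1, ArithmeticFunction.pmul_apply, latA_apply _ _ h2]
  simp

lemma pmul_id_mul (f g : ArithmeticFunction ℕ) :
    ArithmeticFunction.pmul ArithmeticFunction.id (f * g) =
    ArithmeticFunction.pmul ArithmeticFunction.id f *
      ArithmeticFunction.pmul ArithmeticFunction.id g := by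
  ext m
  rw [ArithmeticFunction.pmul_apply, ArithmeticFunction.mul_apply, ArithmeticFunction.mul_apply,
    Finset.mul_sum]
  refine Finset.sum_congr rfl fun p hp => ?_
  have h := (Nat.mem_divisorsAntidiagonal.1 hp).1
  simp only [ArithmeticFunction.pmul_apply, ArithmeticFunction.id_apply]
  rw [← h]; ring

lemma latA_succ' (ℓ : ℕ) : latA (ℓ + 1) = ArithmeticFunction.pow ℓ * latA ℓ := by
  induction ℓ with
  | zero =>
    rw [latA_succ]
    have : ArithmeticFunction.pmul ArithmeticFunction.id (latA 0) = latA 0 := by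
      ext m
      by_cases hm : m = 0
      · subst hm; simp
      rw [ArithmeticFunction.pmul_apply, latA_apply _ _ hm, lat_zero]
      split_ifs with h
      · subst h; simp
      · simp
    rw [this]
    congr 1
  | succ ℓ ih =>
    rw [latA_succ (ℓ + 1)]
    conv_lhs => rw [ih]
    rw [pmul_id_mul, ← mul_assoc, mul_comm ArithmeticFunction.zeta, mul_assoc, ← latA_succ]
    congr 1
    ext m
    simp only [ArithmeticFunction.pmul_apply, ArithmeticFunction.id_apply,
      ArithmeticFunction.pow_apply]
    by_cases hm : m = 0
    · simp [hm]
    · simp [hm, pow_succ, mul_comm]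

lemma lat_succ' (ℓ m : ℕ) (hm : m ≠ 0) :
    lat (ℓ + 1) m = ∑ p ∈ Nat.divisorsAntidiagonal m, p.1 ^ ℓ * lat ℓ p.2 := by
  rw [← latA_apply _ _ hm, latA_succ', ArithmeticFunction.mul_apply]
  refine Finset.sum_congr rfl fun p hp => ?_
  have h := Nat.mem_divisorsAntidiagonal.1 hp
  have h1 : p.1 ≠ 0 := by intro h0; rw [h0, zero_mul] at h; exact h.2 h.1.symm
  have h2 : p.2 ≠ 0 := by intro h0; rw [h0, mul_zero] at h; exact h.2 h.1.symm
  rw [ArithmeticFunction.pow_apply, latA_apply _ _ h2]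
  simp [h1]

lemma lat_one (ℓ : ℕ) : lat ℓ 1 = 1 := by
  induction ℓ with
  | zero => simp [lat_zero]
  | succ ℓ ih => rw [lat_succ' _ _ one_ne_zero]; simp [ih]

lemma lat_ge (ℓ m : ℕ) (hm : m ≠ 0) : m ^ ℓ ≤ lat (ℓ + 1) m := by
  rw [lat_succ' _ _ hm]
  have := Finset.single_le_sum (f := fun p : ℕ × ℕ => p.1 ^ ℓ * lat ℓ p.2)
    (fun _ _ => Nat.zero_le _) (show (m, 1) ∈ Nat.divisorsAntidiagonal m by simp [hm])
  simpa [lat_one] using this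

lemma hasSum_divisors (F : ℕ → ℕ → ℝ) (a : ℝ)
    (h : HasSum (fun p : ℕ+ × ℕ+ => F p.1 p.2) a) :
    HasSum (fun n : ℕ+ => ∑ p ∈ Nat.divisorsAntidiagonal n, F p.1 p.2) a := by
  have h2 := (sigmaAntidiagonalEquivProd.hasSum_iff).2 h
  refine h2.sigma (fun n => ?_)
  rw [← Finset.sum_coe_sort (Nat.divisorsAntidiagonal n) (fun p => F p.1 p.2)]
  exact hasSum_fintype _

lemma summable_lat (ℓ s : ℕ) (hs : ℓ + 1 ≤ s) :
    Summable (fun m : ℕ+ => (lat ℓ m : ℝ) / (m : ℝ) ^ s) := by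
  induction ℓ generalizing s with
  | zero =>
    apply summable_of_hasFiniteSupport
    refine (Set.finite_singleton (1 : ℕ+)).subset ?_
    intro m hm
    by_contra h
    apply hm
    simp only [Set.mem_singleton_iff] at h
    have : (m : ℕ) ≠ 1 := by simpa using h
    simp [lat_zero, this]
  | succ ℓ ih =>
    have h1 := ih s (by omega)
    have h2 : Summable (fun d : ℕ+ => 1 / (d : ℝ) ^ 2) :=
      (Real.summable_one_div_nat_pow.2 (by norm_num : 1 < 2)).comp_injective PNat.coe_injective
    have h3 := h2.mul_of_nonneg h1 (fun _ => by positivity) (fun _ => by positivity)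
    have h4 : Summable (fun p : ℕ+ × ℕ+ => ((p.1 : ℕ) : ℝ) ^ ℓ * (lat ℓ p.2 : ℝ) /
        (((p.1 : ℕ) : ℝ) * ((p.2 : ℕ) : ℝ)) ^ s) := by
      refine Summable.of_nonneg_of_le (fun _ => by positivity) (fun p => ?_) h3
      have hd : (0 : ℝ) < ((p.1 : ℕ) : ℝ) := by exact_mod_cast p.1.pos
      have hd1 : (1 : ℝ) ≤ ((p.1 : ℕ) : ℝ) := by exact_mod_cast p.1.pos
      have hr : (0 : ℝ) < ((p.2 : ℕ) : ℝ) := by exact_mod_cast p.2.pos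
      rw [mul_pow, div_mul_div_comm, div_le_div_iff₀ (by positivity) (by positivity)]
      have : ((p.1 : ℕ) : ℝ) ^ ℓ * ((p.1 : ℕ) : ℝ) ^ 2 ≤ ((p.1 : ℕ) : ℝ) ^ s := by
        rw [← pow_add]; exact pow_le_pow_right₀ hd1 (by omega)
      calc _ = (((p.1 : ℕ) : ℝ) ^ ℓ * ((p.1 : ℕ) : ℝ) ^ 2) * ((lat ℓ p.2 : ℝ) * ((p.2 : ℕ) : ℝ) ^ s) := by ring
        _ ≤ ((p.1 : ℕ) : ℝ) ^ s * ((lat ℓ p.2 : ℝ) * ((p.2 : ℕ) : ℝ) ^ s) := by gcongr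
        _ = _ := by ring
    have h5 := (hasSum_divisors (fun d r => (d : ℝ) ^ ℓ * (lat ℓ r : ℝ) / ((d : ℝ) * (r : ℝ)) ^ s) _
      h4.hasSum).summable
    refine h5.congr (fun n => ?_)
    rw [lat_succ' _ _ n.pos.ne']
    push_cast
    rw [Finset.sum_div]
    refine Finset.sum_congr rfl fun p hp => ?_
    have h := (Nat.mem_divisorsAntidiagonal.1 hp).1
    rw [← h]; push_cast; rfl

/-- the normalized power-geometric sum -/
noncomputable def gsum (p : ℕ) (τ : ℝ) : ℝ :=
  τ ^ (p + 1) * ∑' d : ℕ, ((d : ℝ) + 1) ^ p * Real.exp (-(((d : ℝ) + 1) * τ))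

lemma gsum_term (p : ℕ) (τ : ℝ) (hτ : 0 < τ) (d : ℕ) :
    τ ^ p * (((d : ℝ) + 1) ^ p * Real.exp (-(((d : ℝ) + 1) * τ))) ≤
      2 ^ p * p.factorial * (Real.exp (-(τ / 2)) * Real.exp (-(τ / 2)) ^ d) := by
  have h := Real.pow_div_factorial_le_exp ((((d : ℝ) + 1) * τ) / 2) (by positivity) p
  rw [div_le_iff₀ (by positivity)] at h
  have e1 : Real.exp (-(τ / 2)) * Real.exp (-(τ / 2)) ^ d =
      Real.exp ((((d : ℝ) + 1) * τ) / 2) * Real.exp (-(((d : ℝ) + 1) * τ)) := by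
    rw [← Real.exp_nat_mul, ← Real.exp_add, ← Real.exp_add]; congr 1; ring
  rw [e1]
  calc _ = 2 ^ p * ((((d : ℝ) + 1) * τ) / 2) ^ p * Real.exp (-(((d : ℝ) + 1) * τ)) := by
        rw [div_pow, mul_pow]; field_simp
    _ ≤ 2 ^ p * (Real.exp ((((d : ℝ) + 1) * τ) / 2) * p.factorial) * Real.exp (-(((d : ℝ) + 1) * τ)) := by
        gcongr
    _ = _ := by ring

lemma gsum_summable (p : ℕ) (τ : ℝ) (hτ : 0 < τ) :
    Summable (fun d : ℕ => ((d : ℝ) + 1) ^ p * Real.exp (-(((d : ℝ) + 1) * τ))) := by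
  have h1 : Summable (fun d : ℕ => 2 ^ p * p.factorial * (Real.exp (-(τ / 2)) * Real.exp (-(τ / 2)) ^ d)) :=
    ((summable_geometric_of_lt_one (Real.exp_pos _).le
      (by rw [Real.exp_lt_one_iff]; linarith)).mul_left _).mul_left _
  have h2 : Summable (fun d : ℕ => τ ^ p * (((d : ℝ) + 1) ^ p * Real.exp (-(((d : ℝ) + 1) * τ)))) :=
    Summable.of_nonneg_of_le (fun d => by positivity) (gsum_term p τ hτ) h1
  exact (summable_mul_left_iff (by positivity)).1 h2

lemma gsum_nonneg (p : ℕ) (τ : ℝ) (hτ : 0 < τ) : 0 ≤ gsum p τ := by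
  unfold gsum
  exact mul_nonneg (by positivity) (tsum_nonneg fun d => by positivity)

lemma gsum_le (p : ℕ) (τ : ℝ) (hτ : 0 < τ) : gsum p τ ≤ 2 ^ (p + 1) * p.factorial := by
  have hr1 : Real.exp (-(τ / 2)) < 1 := by rw [Real.exp_lt_one_iff]; linarith
  have h1 : HasSum (fun d : ℕ => 2 ^ p * p.factorial * (Real.exp (-(τ / 2)) * Real.exp (-(τ / 2)) ^ d))
      (2 ^ p * p.factorial * (Real.exp (-(τ / 2)) * (1 - Real.exp (-(τ / 2)))⁻¹)) :=
    ((hasSum_geometric_of_lt_one (Real.exp_pos _).le hr1).mul_left _).mul_left _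
  have h2 := hasSum_le (gsum_term p τ hτ) ((gsum_summable p τ hτ).hasSum.mul_left (τ ^ p)) h1
  have h3 : τ * (Real.exp (-(τ / 2)) * (1 - Real.exp (-(τ / 2)))⁻¹) ≤ 2 := by
    rw [← mul_assoc, ← div_eq_mul_inv, div_le_iff₀ (by linarith)]
    have h4 := Real.add_one_le_exp (τ / 2)
    have h5 : Real.exp (τ / 2) * Real.exp (-(τ / 2)) = 1 := by rw [← Real.exp_add]; simp
    nlinarith [Real.exp_pos (-(τ / 2))]
  unfold gsum
  calc _ = τ * (τ ^ p * ∑' d : ℕ, ((d : ℝ) + 1) ^ p * Real.exp (-(((d : ℝ) + 1) * τ))) := by ring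
    _ ≤ τ * (2 ^ p * p.factorial * (Real.exp (-(τ / 2)) * (1 - Real.exp (-(τ / 2)))⁻¹)) := by gcongr
    _ = 2 ^ p * p.factorial * (τ * (Real.exp (-(τ / 2)) * (1 - Real.exp (-(τ / 2)))⁻¹)) := by ring
    _ ≤ 2 ^ p * p.factorial * 2 := by gcongr
    _ = _ := by ring

lemma gsum_tendsto (p : ℕ) : Tendsto (gsum p) (𝓝[>] 0) (𝓝 (p.factorial : ℝ)) := by
  have hlim : Tendsto (fun τ : ℝ => τ / (1 - Real.exp (-τ))) (𝓝[>] 0) (𝓝 1) := by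
    have h1 : HasDerivAt (fun τ : ℝ => 1 - Real.exp (-τ)) 1 0 := by
      have := ((Real.hasDerivAt_exp (-0)).comp (0 : ℝ) (hasDerivAt_neg (0 : ℝ))).const_sub 1
      simpa using! this
    have h2 := h1.tendsto_slope_zero_right
    have h3 := h2.inv₀ one_ne_zero
    simp only [inv_one] at h3
    refine h3.congr (fun τ => ?_)
    simp [div_eq_mul_inv, mul_comm]
  have hexp : Tendsto (fun τ : ℝ => Real.exp (-τ)) (𝓝[>] 0) (𝓝 1) := by
    have : Tendsto (fun τ : ℝ => Real.exp (-τ)) (𝓝 0) (𝓝 (Real.exp (-0))) :=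
      (by fun_prop : Continuous fun τ : ℝ => Real.exp (-τ)).tendsto 0
    simp only [neg_zero, Real.exp_zero] at this
    exact this.mono_left nhdsWithin_le_nhds
  have hup : Tendsto (fun τ : ℝ => (p.factorial : ℝ) * (Real.exp (-τ) * (τ / (1 - Real.exp (-τ))) ^ (p + 1)))
      (𝓝[>] 0) (𝓝 (p.factorial : ℝ)) := by
    have := (hexp.mul (hlim.pow (p + 1))).const_mul (p.factorial : ℝ)
    simpa using this
  have hlo : Tendsto (fun τ : ℝ => (p.factorial : ℝ) * (Real.exp (-τ) ^ (p + 1) * (τ / (1 - Real.exp (-τ))) ^ (p + 1)))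
      (𝓝[>] 0) (𝓝 (p.factorial : ℝ)) := by
    have := ((hexp.pow (p + 1)).mul (hlim.pow (p + 1))).const_mul (p.factorial : ℝ)
    simpa using this
  have hterm : ∀ (τ : ℝ) (d : ℕ), Real.exp (-(((d : ℝ) + 1) * τ)) = Real.exp (-τ) * Real.exp (-τ) ^ d := by
    intro τ d
    rw [← Real.exp_nat_mul, ← Real.exp_add]; congr 1; ring
  refine tendsto_of_tendsto_of_tendsto_of_le_of_le' hlo hup ?_ ?_
  · filter_upwards [self_mem_nhdsWithin] with τ hτ
    have hτ : 0 < τ := hτ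
    have hr1 : Real.exp (-τ) < 1 := by rw [Real.exp_lt_one_iff]; linarith
    have hs := hasSum_choose_mul_geometric_of_norm_lt_one (𝕜 := ℝ) p (r := Real.exp (-τ))
      (by rw [Real.norm_of_nonneg (Real.exp_pos _).le]; exact hr1)
    have hS := gsum_summable p τ hτ
    have h0 := hS.sum_add_tsum_nat_add p
    have h1 : ∑' d : ℕ, (((d + p : ℕ) : ℝ) + 1) ^ p * Real.exp (-((((d + p : ℕ) : ℝ) + 1) * τ)) ≤
        ∑' d : ℕ, ((d : ℝ) + 1) ^ p * Real.exp (-(((d : ℝ) + 1) * τ)) := by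
      rw [← h0]
      have : 0 ≤ ∑ i ∈ Finset.range p, ((i : ℝ) + 1) ^ p * Real.exp (-(((i : ℝ) + 1) * τ)) :=
        Finset.sum_nonneg fun i _ => by positivity
      linarith
    have h2 := hasSum_le (f := fun n : ℕ => (p.factorial * Real.exp (-τ) ^ (p + 1)) *
        (((n + p).choose p : ℝ) * Real.exp (-τ) ^ n))
      (g := fun d : ℕ => (((d + p : ℕ) : ℝ) + 1) ^ p * Real.exp (-((((d + p : ℕ) : ℝ) + 1) * τ)))
      (fun d => by
        rw [hterm]
        have h3 : (p.factorial : ℝ) * ((d + p).choose p : ℝ) ≤ (((d + p : ℕ) : ℝ) + 1) ^ p := by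
          have := Nat.descFactorial_le_pow (d + p) p
          rw [Nat.descFactorial_eq_factorial_mul_choose] at this
          calc (p.factorial : ℝ) * ((d + p).choose p : ℝ) ≤ ((d + p : ℕ) : ℝ) ^ p := by exact_mod_cast this
            _ ≤ _ := by gcongr; linarith
        calc _ = ((p.factorial : ℝ) * ((d + p).choose p : ℝ)) * (Real.exp (-τ) * Real.exp (-τ) ^ (d + p)) := by ring
          _ ≤ _ := by gcongr)
      (hs.mul_left _) ((summable_nat_add_iff (f := fun d : ℕ => ((d : ℝ) + 1) ^ p * Real.exp (-(((d : ℝ) + 1) * τ))) p).2 hS).hasSum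
    unfold gsum
    calc _ = τ ^ (p + 1) * ((p.factorial * Real.exp (-τ) ^ (p + 1)) * (1 / (1 - Real.exp (-τ)) ^ (p + 1))) := by
          rw [div_pow]; ring
      _ ≤ _ := by gcongr; exact h2.trans h1
  · filter_upwards [self_mem_nhdsWithin] with τ hτ
    have hτ : 0 < τ := hτ
    have hr1 : Real.exp (-τ) < 1 := by rw [Real.exp_lt_one_iff]; linarith
    have hs := hasSum_choose_mul_geometric_of_norm_lt_one (𝕜 := ℝ) p (r := Real.exp (-τ))
      (by rw [Real.norm_of_nonneg (Real.exp_pos _).le]; exact hr1)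
    have h2 := hasSum_le (g := fun n : ℕ => (p.factorial * Real.exp (-τ)) *
        (((n + p).choose p : ℝ) * Real.exp (-τ) ^ n))
      (f := fun d : ℕ => ((d : ℝ) + 1) ^ p * Real.exp (-(((d : ℝ) + 1) * τ)))
      (fun d => by
        rw [hterm]
        have h3 : ((d : ℝ) + 1) ^ p ≤ (p.factorial : ℝ) * ((d + p).choose p : ℝ) := by
          have := Nat.pow_succ_le_ascFactorial (d + 1) p
          rw [Nat.ascFactorial_eq_factorial_mul_choose] at this
          exact_mod_cast this
        calc _ ≤ ((p.factorial : ℝ) * ((d + p).choose p : ℝ)) * (Real.exp (-τ) * Real.exp (-τ) ^ d) := by gcongr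
          _ = _ := by ring)
      (gsum_summable p τ hτ).hasSum (hs.mul_left _)
    unfold gsum
    calc _ ≤ τ ^ (p + 1) * ((p.factorial * Real.exp (-τ)) * (1 / (1 - Real.exp (-τ)) ^ (p + 1))) := by
          gcongr
      _ = _ := by rw [div_pow]; ring


/-- weights -/
noncomputable def wt (ℓ m : ℕ) : ℝ := (lat ℓ m : ℝ) / m

lemma wt_nonneg (ℓ m : ℕ) : 0 ≤ wt ℓ m := by unfold wt; positivity
lemma wt_zero (ℓ : ℕ) : wt ℓ 0 = 0 := by simp [wt]
lemma wt_ge (k m : ℕ) (hm : m ≠ 0) : (m : ℝ) ^ k ≤ wt (k + 2) m := by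
  unfold wt
  have h0 : (0 : ℝ) < m := by positivity
  rw [le_div_iff₀ h0]
  have := lat_ge (k + 1) m hm
  rw [← pow_succ]; exact_mod_cast this

/-- the sums -/
noncomputable def Ssum (ℓ j : ℕ) (t : ℝ) : ℝ :=
  ∑' m : ℕ, wt ℓ m * (m : ℝ) ^ j * Real.exp (-((m : ℝ) * t))

/-- The reduced form -/
noncomputable def Sred (k j : ℕ) (t : ℝ) : ℝ :=
  ∑' r : ℕ+, (lat (k + 1) r : ℝ) / (r : ℝ) ^ (k + 2) * gsum (k + j) ((r : ℝ) * t)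

lemma Sred_summable (k j : ℕ) (t : ℝ) (ht : 0 < t) : Summable (fun r : ℕ+ =>
    (lat (k + 1) r : ℝ) / (r : ℝ) ^ (k + 2) * gsum (k + j) ((r : ℝ) * t)) := by
  have hp : ∀ r : ℕ+, (0 : ℝ) < (r : ℝ) * t := fun r => by
    have : (0 : ℝ) < ((r : ℕ) : ℝ) := by exact_mod_cast r.pos
    positivity
  refine Summable.of_nonneg_of_le (fun r => mul_nonneg (by positivity) (gsum_nonneg _ _ (hp r)))
    (fun r => ?_) ((summable_lat (k + 1) (k + 2) le_rfl).mul_right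
      (2 ^ (k + j + 1) * ((k + j).factorial : ℝ)))
  exact mul_le_mul_of_nonneg_left (gsum_le _ _ (hp r)) (by positivity)

lemma S_hasSum (k j : ℕ) (t : ℝ) (ht : 0 < t) :
    HasSum (fun m : ℕ => wt (k + 2) m * (m : ℝ) ^ j * Real.exp (-((m : ℝ) * t)))
      ((t ^ (k + j + 1))⁻¹ * Sred k j t) := by
  let F : ℕ → ℕ → ℝ := fun d r => (d : ℝ) ^ (k + 1) * (lat (k + 1) r : ℝ) / ((d : ℝ) * r) *
    ((d : ℝ) * r) ^ j * Real.exp (-((d : ℝ) * r * t))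
  have hrow : ∀ r : ℕ+, HasSum (fun d : ℕ+ => F d r) ((t ^ (k + j + 1))⁻¹ *
      ((lat (k + 1) r : ℝ) / (r : ℝ) ^ (k + 2) * gsum (k + j) ((r : ℝ) * t))) := by
    intro r
    have hr : (0 : ℝ) < ((r : ℕ) : ℝ) := by exact_mod_cast r.pos
    have h1 := (gsum_summable (k + j) ((r : ℝ) * t) (by positivity)).hasSum
    have h2 : HasSum (fun d : ℕ+ => ((d : ℕ) : ℝ) ^ (k + j) * Real.exp (-((d : ℕ) * ((r : ℝ) * t))))
        (∑' d : ℕ, ((d : ℝ) + 1) ^ (k + j) * Real.exp (-(((d : ℝ) + 1) * ((r : ℝ) * t)))) := by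
      rw [← Equiv.pnatEquivNat.symm.hasSum_iff]
      refine h1.congr_fun ?_
      intro d
      simp
    have h3 := h2.mul_left ((lat (k + 1) r : ℝ) * (r : ℝ) ^ j / r)
    convert! h3 using 1
    · funext d
      have hd : (0 : ℝ) < ((d : ℕ) : ℝ) := by exact_mod_cast d.pos
      simp only [F]
      rw [show ((d : ℕ) : ℝ) * ((r : ℝ) * t) = (d : ℝ) * r * t by ring]
      field_simp
      ring
    · unfold gsum
      field_simp
      ring
  have hS := (Sred_summable k j t ht).mul_left ((t ^ (k + j + 1))⁻¹)
  have hsum : Summable (fun p : ℕ+ × ℕ+ => F p.2 p.1) := by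
    rw [summable_prod_of_nonneg (fun p => by simp only [F, Pi.zero_apply]; positivity)]
    refine ⟨fun r => (hrow r).summable, ?_⟩
    refine hS.congr (fun r => ?_)
    rw [(hrow r).tsum_eq]
  have htot : HasSum (fun p : ℕ+ × ℕ+ => F p.2 p.1) ((t ^ (k + j + 1))⁻¹ * Sred k j t) := by
    have h1 := hsum.hasSum.prod_fiberwise (fun r => hrow r)
    have h2 : HasSum _ ((t ^ (k + j + 1))⁻¹ * Sred k j t) :=
      (Sred_summable k j t ht).hasSum.mul_left ((t ^ (k + j + 1))⁻¹)
    rw [← h1.unique h2]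
    exact hsum.hasSum
  have htot' : HasSum (fun p : ℕ+ × ℕ+ => F p.1 p.2) ((t ^ (k + j + 1))⁻¹ * Sred k j t) :=
    ((Equiv.prodComm ℕ+ ℕ+).hasSum_iff (f := fun p : ℕ+ × ℕ+ => F p.1 p.2)).1 htot
  have h5 := hasSum_divisors F _ htot'
  rw [← PNat.coe_injective.hasSum_iff]
  · convert! h5 using 1
    funext n
    have hn : (0 : ℝ) < ((n : ℕ) : ℝ) := by exact_mod_cast n.pos
    simp only [Function.comp, wt]
    rw [lat_succ' _ _ n.pos.ne']
    push_cast
    rw [Finset.sum_div, Finset.sum_mul, Finset.sum_mul]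
    refine Finset.sum_congr rfl fun p hp => ?_
    have h := (Nat.mem_divisorsAntidiagonal.1 hp).1
    simp only [F]
    rw [← h]; push_cast; rfl
  · intro m hm
    have : m = 0 := by
      by_contra h
      exact hm ⟨⟨m, Nat.pos_of_ne_zero h⟩, rfl⟩
    simp [this, wt_zero]

lemma S_summable (k j : ℕ) (t : ℝ) (ht : 0 < t) :
    Summable (fun m : ℕ => wt (k + 2) m * (m : ℝ) ^ j * Real.exp (-((m : ℝ) * t))) :=
  (S_hasSum k j t ht).summable

lemma Ssum_eq (k j : ℕ) (t : ℝ) (ht : 0 < t) :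
    t ^ (k + j + 1) * Ssum (k + 2) j t = Sred k j t := by
  unfold Ssum
  rw [(S_hasSum k j t ht).tsum_eq]
  field_simp

/-- the zeta constant -/
noncomputable def Zcon (k : ℕ) : ℝ := ∑' r : ℕ+, (lat (k + 1) r : ℝ) / (r : ℝ) ^ (k + 2)

lemma Zcon_pos (k : ℕ) : 0 < Zcon k := by
  refine (summable_lat (k + 1) (k + 2) le_rfl).tsum_pos (fun _ => by positivity) 1 ?_
  simp [lat_one]

lemma S_tendsto (k j : ℕ) : Tendsto (fun t : ℝ => t ^ (k + j + 1) * Ssum (k + 2) j t) (𝓝[>] 0)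
    (𝓝 (((k + j).factorial : ℝ) * Zcon k)) := by
  have h : Tendsto (Sred k j) (𝓝[>] 0) (𝓝 (∑' r : ℕ+, (lat (k + 1) r : ℝ) / (r : ℝ) ^ (k + 2) *
      ((k + j).factorial : ℝ))) := by
    unfold Sred
    refine tendsto_tsum_of_dominated_convergence
      ((summable_lat (k + 1) (k + 2) le_rfl).mul_right (2 ^ (k + j + 1) * ((k + j).factorial : ℝ)))
      (fun r => ?_) ?_
    · have hr : (0 : ℝ) < ((r : ℕ) : ℝ) := by exact_mod_cast r.pos
      refine Tendsto.const_mul _ ((gsum_tendsto (k + j)).comp ?_)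
      refine tendsto_nhdsWithin_iff.2 ⟨?_, ?_⟩
      · have : Tendsto (fun t : ℝ => (r : ℝ) * t) (𝓝 0) (𝓝 ((r : ℝ) * 0)) :=
          (by fun_prop : Continuous fun t : ℝ => (r : ℝ) * t).tendsto 0
        rw [mul_zero] at this
        exact this.mono_left nhdsWithin_le_nhds
      · filter_upwards [self_mem_nhdsWithin] with t ht
        exact mul_pos hr ht
    · filter_upwards [self_mem_nhdsWithin] with t ht r
      have ht : 0 < t := ht
      have hr : (0 : ℝ) < ((r : ℕ) : ℝ) := by exact_mod_cast r.pos
      rw [Real.norm_of_nonneg (mul_nonneg (by positivity) (gsum_nonneg _ _ (by positivity)))]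
      exact mul_le_mul_of_nonneg_left (gsum_le _ _ (by positivity)) (by positivity)
  rw [tsum_mul_right, mul_comm] at h
  refine h.congr' ?_
  filter_upwards [self_mem_nhdsWithin] with t ht
  exact (Ssum_eq k j t ht).symm


lemma Ssum_nonneg (ℓ j : ℕ) (t : ℝ) : 0 ≤ Ssum ℓ j t :=
  tsum_nonneg fun m => mul_nonneg (mul_nonneg (wt_nonneg _ _) (by positivity)) (by positivity)

lemma Ssum_anti (k j : ℕ) {t u : ℝ} (ht : 0 < t) (h : t ≤ u) :
    Ssum (k + 2) j u ≤ Ssum (k + 2) j t := by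
  refine Summable.tsum_le_tsum (fun m => ?_) (S_summable k j u (ht.trans_le h)) (S_summable k j t ht)
  refine mul_le_mul_of_nonneg_left ?_ (mul_nonneg (wt_nonneg _ _) (by positivity))
  apply Real.exp_le_exp.mpr
  have : (m : ℝ) * t ≤ m * u := by gcongr
  linarith

lemma Ssum_cont (k j : ℕ) {a : ℝ} (ha : 0 < a) : ContinuousOn (Ssum (k + 2) j) (Set.Ici a) := by
  refine continuousOn_tsum (u := fun m : ℕ => wt (k + 2) m * (m : ℝ) ^ j * Real.exp (-((m : ℝ) * a)))
    (fun m => by fun_prop) (S_summable k j a ha) (fun m t ht => ?_)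
  have h0 : 0 ≤ wt (k + 2) m * (m : ℝ) ^ j := mul_nonneg (wt_nonneg _ _) (by positivity)
  rw [Real.norm_of_nonneg (by positivity)]
  refine mul_le_mul_of_nonneg_left ?_ h0
  apply Real.exp_le_exp.mpr
  have : (m : ℝ) * a ≤ m * t := by gcongr; exact ht
  linarith

lemma Ssum_pos (k j : ℕ) {t : ℝ} (ht : 0 < t) : 0 < Ssum (k + 2) j t := by
  refine (S_summable k j t ht).tsum_pos (fun m => mul_nonneg (mul_nonneg (wt_nonneg _ _) (by positivity)) (by positivity)) 1 ?_
  have := wt_ge k 1 one_ne_zero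
  simp at this
  have h : 0 < wt (k + 2) 1 := by linarith
  positivity

lemma Ssum_tendsto_atTop (k j : ℕ) : Tendsto (Ssum (k + 2) j) (𝓝[>] 0) atTop := by
  have h1 := S_tendsto k j
  have h2 : Tendsto (fun t : ℝ => (t ^ (k + j + 1))⁻¹) (𝓝[>] 0) atTop := by
    apply Tendsto.comp tendsto_inv_nhdsGT_zero
    refine tendsto_nhdsWithin_iff.mpr ⟨?_, ?_⟩
    · have : Tendsto (fun t : ℝ => t ^ (k + j + 1)) (𝓝 0) (𝓝 (0 ^ (k + j + 1))) :=
        (continuous_pow _).tendsto 0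
      rw [zero_pow (by omega)] at this
      exact this.mono_left nhdsWithin_le_nhds
    · filter_upwards [self_mem_nhdsWithin] with t (ht : 0 < t)
      exact pow_pos ht _
  have h3 := h1.pos_mul_atTop (mul_pos (by positivity) (Zcon_pos k)) h2
  refine h3.congr' ?_
  filter_upwards [self_mem_nhdsWithin] with t (ht : 0 < t)
  field_simp

lemma saddle (k : ℕ) (x : ℝ) (hx : 0 < x) : ∃ t : ℕ → ℝ, Tendsto t atTop (𝓝[>] 0) ∧
    ∀ᶠ n in atTop, x * Ssum (k + 2) 1 (t n) = n := by
  have hT := Ssum_tendsto_atTop k 1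
  -- for large n a solution in (0,1]
  have h1 : ∀ᶠ n : ℕ in atTop, ∃ t, 0 < t ∧ x * Ssum (k + 2) 1 t = n := by
    filter_upwards [(tendsto_natCast_atTop_atTop (R := ℝ)).eventually_ge_atTop (x * Ssum (k + 2) 1 1)] with n hn
    have h2 : ∀ᶠ t in 𝓝[>] (0:ℝ), (n : ℝ) / x ≤ Ssum (k + 2) 1 t := hT.eventually_ge_atTop _
    have h3 : ∀ᶠ t in 𝓝[>] (0:ℝ), t < 1 ∧ 0 < t :=
      (Ioo_mem_nhdsGT (zero_lt_one)) |> fun h => by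
        filter_upwards [h] with t ht using ⟨ht.2, ht.1⟩
    obtain ⟨a, ha, ha1, ha0⟩ := (h2.and h3).exists
    have hc : ContinuousOn (fun t => x * Ssum (k + 2) 1 t) (Set.Icc a 1) :=
      ((Ssum_cont k 1 ha0).mono Set.Icc_subset_Ici_self).const_smul x
    have hmem : (n : ℝ) ∈ Set.Icc (x * Ssum (k + 2) 1 1) (x * Ssum (k + 2) 1 a) := by
      refine ⟨hn, ?_⟩
      rw [div_le_iff₀ hx] at ha; linarith
    obtain ⟨t, ht, he⟩ := intermediate_value_Icc' ha1.le hc hmem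
    exact ⟨t, ha0.trans_le ht.1, he⟩
  classical
  let t : ℕ → ℝ := fun n => if h : ∃ t, 0 < t ∧ x * Ssum (k + 2) 1 t = n then h.choose else 1
  have ht : ∀ᶠ n in atTop, 0 < t n ∧ x * Ssum (k + 2) 1 (t n) = n := by
    filter_upwards [h1] with n hn
    simp only [t, dif_pos hn]
    exact hn.choose_spec
  refine ⟨t, ?_, ht.mono fun n h => h.2⟩
  refine tendsto_nhdsWithin_iff.mpr ⟨?_, ht.mono fun n h => h.1⟩
  rw [Metric.tendsto_nhds]
  intro ε hε
  filter_upwards [ht, (tendsto_natCast_atTop_atTop (R := ℝ)).eventually_gt_atTop (x * Ssum (k + 2) 1 ε)] with n hn h2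
  rw [Real.dist_eq, sub_zero, abs_of_pos hn.1]
  by_contra hcon
  push Not at hcon
  have := Ssum_anti k 1 hε hcon
  have : x * Ssum (k + 2) 1 (t n) ≤ x * Ssum (k + 2) 1 ε := by gcongr
  linarith [hn.2]


/-- complex generating polynomial -/
noncomputable def Hc (ℓ n : ℕ) (y : ℂ) : ℂ :=
  (1 / (n.factorial : ℂ)) * ∑ k ∈ Finset.range (n + 1), (Acount ℓ n k : ℂ) * y ^ k

/-- log generating function -/
noncomputable def Wc (k : ℕ) (q : ℂ) : ℂ := ∑' m : ℕ, (wt (k + 2) m : ℂ) * q ^ m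

lemma Hc_zero (ℓ : ℕ) (y : ℂ) : Hc ℓ 0 y = 1 := by
  simp [Hc, Acount_zero_zero]

lemma Hc_rec (ℓ n : ℕ) (y : ℂ) : ((n : ℂ) + 1) * Hc ℓ (n + 1) y =
    y * ∑ i ∈ Finset.range (n + 1), (lat ℓ (i + 1) : ℂ) * Hc ℓ (n - i) y := by
  have hrec : ∀ k, ((n : ℂ) + 1) * (Acount ℓ (n + 1) (k + 1) : ℂ) =
      ∑ i ∈ Finset.range (n + 1), (lat ℓ (i + 1) : ℂ) * (((n + 1).descFactorial (i + 1) : ℂ) * (Acount ℓ (n - i) k : ℂ)) := by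
    intro k
    have := Acount_rec ℓ (n + 1) k
    have h2 : ∑ m ∈ Finset.Icc 1 (n + 1), lat ℓ m * ((n + 1).descFactorial m * Acount ℓ (n + 1 - m) k)
       = ∑ i ∈ Finset.range (n + 1), lat ℓ (i + 1) * ((n + 1).descFactorial (i + 1) * Acount ℓ (n - i) k) := by
      have h4 := Finset.sum_Ico_add' (fun m => lat ℓ m * ((n + 1).descFactorial m * Acount ℓ (n + 1 - m) k)) 0 (n+1) 1
      rw [Finset.range_eq_Ico]
      refine Eq.trans ?_ (h4.symm.trans ?_)
      · rfl
      · refine Finset.sum_congr rfl fun i _ => ?_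
        rw [Nat.add_sub_add_right]
    rw [h2] at this
    exact_mod_cast this
  have hext : ∀ i ∈ Finset.range (n + 1), Hc ℓ (n - i) y = (1 / ((n - i).factorial : ℂ)) *
      ∑ k ∈ Finset.range (n + 1), (Acount ℓ (n - i) k : ℂ) * y ^ k := by
    intro i hi
    unfold Hc
    congr 1
    refine Finset.sum_subset (Finset.range_mono (by omega)) fun k _ hk => ?_
    rw [Acount_gt ℓ (n - i) k (by simp at hk; omega)]; simp
  rw [Finset.sum_congr rfl fun i hi => by rw [hext i hi]]
  unfold Hc
  rw [Finset.sum_range_succ', Acount_zero_right ℓ (n + 1) (by omega)]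
  have hn : ((n + 1).factorial : ℂ) ≠ 0 := by exact_mod_cast (n + 1).factorial_ne_zero
  rw [← mul_right_inj' hn]
  simp only [Nat.cast_zero, zero_mul, add_zero]
  rw [mul_left_comm, ← mul_assoc ((n+1).factorial : ℂ) (1 / _), mul_one_div_cancel hn, one_mul, Finset.mul_sum]
  simp only [← mul_assoc, hrec]
  simp only [Finset.sum_mul, Finset.mul_sum]
  rw [Finset.sum_comm]
  refine Finset.sum_congr rfl fun i hi => Finset.sum_congr rfl fun k _ => ?_
  have h3 := Nat.factorial_mul_descFactorial (n := n + 1) (k := i + 1) (by simp at hi; omega)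
  rw [Nat.add_sub_add_right] at h3
  have hni : ((n - i).factorial : ℂ) ≠ 0 := by exact_mod_cast (n - i).factorial_ne_zero
  rw [← h3]
  push_cast
  field_simp
  ring

lemma wt_summable (k : ℕ) (r : ℝ) (h0 : 0 ≤ r) (h1 : r < 1) : Summable (fun m : ℕ => wt (k + 2) m * r ^ m) := by
  rcases h0.eq_or_lt with rfl | h0
  · refine summable_of_ne_finset_zero (s := {0}) fun m hm => ?_
    simp at hm; simp [hm]
  · have := S_summable k 0 (-Real.log r) (by have := Real.log_neg h0 h1; linarith)
    refine this.congr fun m => ?_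
    simp only [pow_zero, mul_one, mul_neg, neg_neg]
    rw [Real.exp_nat_mul, Real.exp_log h0]

lemma Wc_hasF (k : ℕ) : HasFPowerSeriesOnBall (Wc k)
    (FormalMultilinearSeries.ofScalars ℂ (fun m => (wt (k + 2) m : ℂ))) 0 1 := by
  set p := (FormalMultilinearSeries.ofScalars ℂ (fun m => (wt (k + 2) m : ℂ)))
  have hr : 1 ≤ p.radius := by
    refine ENNReal.le_of_forall_nnreal_lt fun r hr => ?_
    apply FormalMultilinearSeries.le_radius_of_summable
    have := wt_summable k r r.2 (by exact_mod_cast hr)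
    refine this.congr fun m => ?_
    simp only [p, FormalMultilinearSeries.ofScalars_norm, Complex.norm_real, Real.norm_of_nonneg (wt_nonneg _ _)]
  have h := (p.hasFPowerSeriesOnBall (zero_lt_one.trans_le hr)).mono zero_lt_one hr
  have : p.sum = Wc k := by
    funext q
    simp [p, FormalMultilinearSeries.sum, Wc, smul_eq_mul, mul_comm]
  rwa [this] at h

lemma Wc_iter (k m : ℕ) : iteratedDeriv m (Wc k) 0 = (m.factorial : ℂ) * wt (k + 2) m := by
  have := (Wc_hasF k).factorial_smul 1 m
  rw [iteratedDeriv_eq_iteratedFDeriv, ← this]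
  simp

lemma Wc_diff (k : ℕ) : DifferentiableOn ℂ (Wc k) (Metric.ball 0 1) := by
  have := (Wc_hasF k).differentiableOn
  refine this.mono fun z hz => ?_
  have hz' : ‖z‖ < 1 := by simpa using hz
  rw [Metric.mem_eball, edist_dist, dist_zero_right]
  exact ENNReal.ofReal_lt_one.mpr hz'

/-- generating function -/
noncomputable def Gf (k : ℕ) (y : ℂ) (q : ℂ) : ℂ := Complex.exp (y * Wc k q)

lemma Gf_diff (k : ℕ) (y : ℂ) : DifferentiableOn ℂ (Gf k y) (Metric.ball 0 1) :=
  ((Wc_diff k).const_mul y).cexp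

lemma Gf_iter (k n : ℕ) (y : ℂ) : iteratedDeriv n (Gf k y) 0 = (n.factorial : ℂ) * Hc (k + 2) n y := by
  have hW : AnalyticAt ℂ (Wc k) 0 := (Wc_diff k).analyticAt (Metric.ball_mem_nhds _ one_pos)
  have hG : AnalyticAt ℂ (Gf k y) 0 := (Gf_diff k y).analyticAt (Metric.ball_mem_nhds _ one_pos)
  induction n using Nat.strong_induction_on with
  | _ n ih =>
    cases n with
    | zero =>
      have : Wc k 0 = 0 := by
        have := Wc_iter k 0
        simpa [wt_zero] using this
      simp [Gf, this, Hc_zero]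
    | succ n =>
      have hd : deriv (Gf k y) =ᶠ[𝓝 0] fun q => y * (deriv (Wc k) q * Gf k y q) := by
        filter_upwards [Metric.ball_mem_nhds (0:ℂ) one_pos] with q hq
        have hw : HasDerivAt (Wc k) (deriv (Wc k) q) q :=
          ((Wc_diff k).differentiableAt (Metric.isOpen_ball.mem_nhds hq)).hasDerivAt
        have := ((hw.const_mul y).cexp).deriv
        unfold Gf
        rw [this]; ring
      rw [iteratedDeriv_succ', hd.iteratedDeriv_eq, iteratedDeriv_const_mul_field,
        iteratedDeriv_fun_mul hW.deriv.contDiffAt hG.contDiffAt]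
      have h1 : ∀ i ∈ Finset.range (n + 1), (n.choose i : ℂ) * iteratedDeriv i (deriv (Wc k)) 0 *
          iteratedDeriv (n - i) (Gf k y) 0 = (n.factorial : ℂ) * ((lat (k + 2) (i + 1) : ℂ) * Hc (k + 2) (n - i) y) := by
        intro i hi
        rw [← iteratedDeriv_succ', Wc_iter, ih (n - i) (by omega)]
        have hi' : i ≤ n := by simp at hi; omega
        rw [← Nat.choose_mul_factorial_mul_factorial hi']
        have : ((i + 1 : ℕ) : ℂ) ≠ 0 := by exact_mod_cast (Nat.succ_ne_zero i)
        rw [Nat.factorial_succ]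
        unfold wt
        push_cast at this ⊢
        field_simp
      rw [Finset.sum_congr rfl h1, ← Finset.mul_sum, mul_left_comm, ← Hc_rec, Nat.factorial_succ]
      push_cast; ring

lemma cauchy_Hc (k n : ℕ) (y : ℂ) (r : ℝ) (h0 : 0 < r) (h1 : r < 1) :
    (r : ℂ) ^ n * Hc (k + 2) n y = (1 / (2 * π) : ℂ) *
      ∫ θ in (-π)..π, Gf k y (r * Complex.exp (θ * Complex.I)) * Complex.exp (-(n * (θ * Complex.I))) := by
  have hd : DifferentiableOn ℂ (Gf k y) (Metric.closedBall 0 r) :=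
    (Gf_diff k y).mono (Metric.closedBall_subset_ball h1)
  have hC := DifferentiableOn.circleIntegral_one_div_sub_center_pow_smul h0 n hd
  rw [Gf_iter] at hC
  have hper : Function.Periodic (fun θ : ℝ => Gf k y (r * Complex.exp (θ * Complex.I)) * Complex.exp (-(n * (θ * Complex.I)))) (2 * π) := by
    intro θ
    have e1 : Complex.exp (((θ + 2 * π : ℝ) : ℂ) * Complex.I) = Complex.exp (θ * Complex.I) := by
      push_cast; rw [add_mul, Complex.exp_add, Complex.exp_two_pi_mul_I, mul_one]
    simp only [e1, Complex.exp_neg, Complex.exp_nat_mul]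
  have hshift := hper.intervalIntegral_add_eq (-π) 0
  rw [show -π + 2 * π = π by ring, zero_add] at hshift
  rw [hshift]
  have hr : (r : ℂ) ≠ 0 := by exact_mod_cast h0.ne'
  have : (∮ z in C(0, r), (1 / (z - 0) ^ (n + 1)) • Gf k y z) = (Complex.I / r ^ n) *
     ∫ θ in (0)..2 * π, Gf k y (r * Complex.exp (θ * Complex.I)) * Complex.exp (-(n * (θ * Complex.I))) := by
    rw [circleIntegral, ← intervalIntegral.integral_const_mul]
    refine intervalIntegral.integral_congr fun θ _ => ?_
    simp only [deriv_circleMap, circleMap, smul_eq_mul, zero_add, sub_zero]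
    rw [Complex.exp_neg, Complex.exp_nat_mul]
    have := Complex.exp_ne_zero (θ * Complex.I)
    field_simp
    ring
  rw [this] at hC
  have hn : (n.factorial : ℂ) ≠ 0 := by exact_mod_cast n.factorial_ne_zero
  have hpi : (π : ℂ) ≠ 0 := by exact_mod_cast Real.pi_ne_zero
  have hI := Complex.I_ne_zero
  rw [smul_eq_mul] at hC
  generalize (∫ θ in (0)..2 * π, Gf k y (r * Complex.exp (θ * Complex.I)) * Complex.exp (-(n * (θ * Complex.I)))) = J at hC ⊢
  field_simp at hC ⊢
  linear_combination (-1) * hC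


/-- Poisson weights -/
noncomputable def lam (k : ℕ) (t : ℝ) (m : ℕ) : ℝ := wt (k + 2) m * Real.exp (-((m : ℝ) * t))

lemma lam_nonneg (k : ℕ) (t : ℝ) (m : ℕ) : 0 ≤ lam k t m :=
  mul_nonneg (wt_nonneg _ _) (Real.exp_pos _).le

lemma lam_hasSum (k j : ℕ) {t : ℝ} (ht : 0 < t) :
    HasSum (fun m : ℕ => lam k t m * (m : ℝ) ^ j) (Ssum (k + 2) j t) := by
  have := (S_summable k j t ht).hasSum
  refine this.congr_fun fun m => ?_
  unfold lam; ring

lemma lam_hasSum0 (k : ℕ) {t : ℝ} (ht : 0 < t) :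
    HasSum (lam k t) (Ssum (k + 2) 0 t) := by
  simpa using lam_hasSum k 0 ht

lemma Wc_hasSum (k : ℕ) {t : ℝ} (ht : 0 < t) (θ : ℝ) :
    HasSum (fun m : ℕ => (lam k t m : ℂ) * Complex.exp ((m * θ : ℝ) * Complex.I))
      (Wc k ((Real.exp (-t) : ℝ) * Complex.exp (θ * Complex.I))) := by
  have hs : Summable (fun m : ℕ => (lam k t m : ℂ) * Complex.exp ((m * θ : ℝ) * Complex.I)) := by
    refine Summable.of_norm ?_
    refine (lam_hasSum0 k ht).summable.congr fun m => ?_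
    rw [norm_mul, Complex.norm_exp_ofReal_mul_I, mul_one, Complex.norm_real,
      Real.norm_of_nonneg (lam_nonneg _ _ _)]
  have := hs.hasSum
  convert! this using 1
  unfold Wc
  refine tsum_congr fun m => ?_
  unfold lam
  rw [mul_pow, ← Complex.exp_nat_mul, ← Complex.ofReal_pow, ← Real.exp_nat_mul]
  push_cast
  rw [show (m : ℂ) * (θ * Complex.I) = m * θ * Complex.I by ring, show (m : ℂ) * -t = -(m * t) by ring]
  ring

/-- the damping sum -/
noncomputable def Dsum (k : ℕ) (t θ : ℝ) : ℝ := ∑' m : ℕ, lam k t m * (1 - Real.cos (m * θ))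

lemma D_summable' (k : ℕ) {t : ℝ} (ht : 0 < t) (θ β : ℝ) :
    Summable (fun m : ℕ => lam k t m * (1 - Real.cos (β + m * θ))) := by
  refine Summable.of_nonneg_of_le (fun m => mul_nonneg (lam_nonneg _ _ _) ?_) (fun m => ?_)
    ((lam_hasSum0 k ht).summable.mul_right 2)
  · linarith [Real.cos_le_one (β + m * θ)]
  · exact mul_le_mul_of_nonneg_left (by linarith [Real.neg_one_le_cos (β + m * θ)]) (lam_nonneg _ _ _)

lemma D_summable (k : ℕ) {t : ℝ} (ht : 0 < t) (θ : ℝ) :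
    Summable (fun m : ℕ => lam k t m * (1 - Real.cos (m * θ))) := by
  simpa using D_summable' k ht θ 0

lemma D_term_nonneg (k : ℕ) (t θ : ℝ) (m : ℕ) : 0 ≤ lam k t m * (1 - Real.cos (m * θ)) :=
  mul_nonneg (lam_nonneg _ _ _) (by linarith [Real.cos_le_one (m * θ)])

lemma one_sub_cos_lower {y : ℝ} (h : |y| ≤ 1) : y ^ 2 / 5 ≤ 1 - Real.cos y := by
  have h1 := Real.cos_le_one_sub_mul_cos_sq (x := y) (by linarith [Real.pi_gt_three])
  have h2 : (2 : ℝ) / π ^ 2 ≥ 1 / 5 := by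
    rw [ge_iff_le, div_le_div_iff₀ (by norm_num) (by positivity)]
    nlinarith [Real.pi_lt_d2, Real.pi_pos]
  nlinarith [sq_nonneg y]

lemma D_lower1 (k : ℕ) {t θ : ℝ} (ht : 0 < t) (ht1 : t ≤ 1 / 2) (hθ : |θ| ≤ t) :
    Real.exp (-1) / 5 * θ ^ 2 * (1 / (4 * t)) ^ (k + 3) ≤ Dsum k t θ := by
  set M : ℕ := ⌊1 / (2 * t)⌋₊ with hM
  have hy : 1 ≤ 1 / (2 * t) := by rw [le_div_iff₀ (by positivity)]; linarith
  have hM1 : (M : ℝ) ≤ 1 / (2 * t) := Nat.floor_le (by positivity)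
  have hM2 : 1 / (4 * t) ≤ M := by
    have h1 : 1 / (2 * t) < M + 1 := Nat.lt_floor_add_one _
    have h2 : (1 : ℝ) ≤ M := by
      have : 1 ≤ M := Nat.le_floor (by simpa using hy)
      exact_mod_cast this
    have : 1 / (4 * t) = (1 / (2 * t)) / 2 := by field_simp; norm_num
    rw [this]; linarith
  have h3 : ∑ m ∈ Finset.Ico M (2 * M), lam k t m * (1 - Real.cos (m * θ)) ≤ Dsum k t θ :=
    (D_summable k ht θ).sum_le_tsum _ fun m _ => D_term_nonneg k t θ m
  refine le_trans ?_ h3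
  have h4 : ∀ m ∈ Finset.Ico M (2 * M), Real.exp (-1) / 5 * θ ^ 2 * (1 / (4 * t)) ^ (k + 2) ≤ lam k t m * (1 - Real.cos (m * θ)) := by
    intro m hm
    rw [Finset.mem_Ico] at hm
    have hm1 : (M : ℝ) ≤ m := by exact_mod_cast hm.1
    have hm2 : (m : ℝ) ≤ 2 * M := by exact_mod_cast hm.2.le
    have hm3 : (m : ℝ) * t ≤ 1 := by
      have : (m : ℝ) ≤ 2 * (1 / (2 * t)) := by linarith
      calc (m : ℝ) * t ≤ 2 * (1 / (2 * t)) * t := by gcongr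
        _ = 1 := by field_simp
    have hm4 : m ≠ 0 := by omega
    have hm5 : |(m : ℝ) * θ| ≤ 1 := by
      rw [abs_mul, Nat.abs_cast]
      calc (m : ℝ) * |θ| ≤ m * t := by gcongr
        _ ≤ 1 := hm3
    have c1 := one_sub_cos_lower hm5
    have c2 := wt_ge k m hm4
    have c3 : Real.exp (-1) ≤ Real.exp (-((m : ℝ) * t)) := Real.exp_le_exp.mpr (by linarith)
    have c4 : (1 / (4 * t)) ^ (k + 2) ≤ (m : ℝ) ^ (k + 2) := by
      gcongr; linarith
    calc Real.exp (-1) / 5 * θ ^ 2 * (1 / (4 * t)) ^ (k + 2) ≤ Real.exp (-1) / 5 * θ ^ 2 * (m : ℝ) ^ (k + 2) := by gcongr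
      _ = ((m : ℝ) ^ k * Real.exp (-1)) * ((m * θ) ^ 2 / 5) := by ring
      _ ≤ lam k t m * (1 - Real.cos (m * θ)) := by
        unfold lam
        apply mul_le_mul _ c1 (by positivity) (mul_nonneg (wt_nonneg _ _) (by positivity))
        apply mul_le_mul c2 c3 (by positivity) (wt_nonneg _ _)
  have h5 := Finset.card_nsmul_le_sum _ _ _ h4
  refine le_trans ?_ h5
  rw [Nat.card_Ico, nsmul_eq_mul, show 2 * M - M = M by omega, pow_succ (1 / (4 * t)) (k + 2), ← mul_assoc, mul_comm]
  have : 0 ≤ Real.exp (-1) / 5 * θ ^ 2 * (1 / (4 * t)) ^ (k + 2) := by positivity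
  gcongr

lemma D_lower2 (k : ℕ) {t θ : ℝ} (ht : 0 < t) (ht1 : t ≤ 1 / 2) (hθ : t ≤ |θ|) (hθ2 : |θ| ≤ π) :
    1 / (20 * t) ≤ Dsum k t θ := by
  set r := Real.exp (-t) with hr
  have hr0 : 0 < r := Real.exp_pos _
  have hr1 : r < 1 := by rw [hr, Real.exp_lt_one_iff]; linarith
  have hr2 : 1 - r ≤ t := by have := Real.add_one_le_exp (-t); linarith
  set q : ℂ := r * Complex.exp (θ * Complex.I) with hq
  have hqn : ‖q‖ = r := by
    rw [hq, norm_mul, Complex.norm_exp_ofReal_mul_I, mul_one, Complex.norm_real, Real.norm_of_nonneg hr0.le]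
  have g1 := hasSum_geometric_of_lt_one hr0.le hr1
  have g2 := hasSum_geometric_of_norm_lt_one (hqn ▸ hr1 : ‖q‖ < 1)
  have g3 := g1.sub (Complex.hasSum_re g2)
  have hle : (1 - r)⁻¹ - ((1 - q)⁻¹).re ≤ Dsum k t θ := by
    refine hasSum_le (fun m => ?_) g3 (D_summable k ht θ).hasSum
    have e1 : (q ^ m).re = r ^ m * Real.cos (m * θ) := by
      rw [hq, mul_pow, ← Complex.exp_nat_mul, ← Complex.ofReal_pow, Complex.re_ofReal_mul,
        show (m : ℂ) * (θ * Complex.I) = ((m * θ : ℝ) : ℂ) * Complex.I by push_cast; ring, Complex.exp_ofReal_mul_I_re]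
    rw [e1]
    have e2 : r ^ m = Real.exp (-((m : ℝ) * t)) := by rw [hr, ← Real.exp_nat_mul]; congr 1; ring
    rcases Nat.eq_zero_or_pos m with rfl | hm
    · simp
    have c2 := wt_ge k m hm.ne'
    have c3 : (1 : ℝ) ≤ (m : ℝ) ^ k := one_le_pow₀ (by exact_mod_cast hm)
    have c4 : r ^ m ≤ lam k t m := by
      unfold lam; rw [← e2]
      have := pow_pos hr0 m
      nlinarith
    have c5 := Real.cos_le_one (m * θ)
    nlinarith
  refine le_trans ?_ hle
  have hn2 : Complex.normSq (1 - q) = (1 - r) ^ 2 + 2 * r * (1 - Real.cos θ) := by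
    have e1 : q.re = r * Real.cos θ := by rw [hq, Complex.re_ofReal_mul, Complex.exp_ofReal_mul_I_re]
    have e2 : q.im = r * Real.sin θ := by rw [hq, Complex.im_ofReal_mul, Complex.exp_ofReal_mul_I_im]
    rw [Complex.normSq_apply]
    simp only [Complex.sub_re, Complex.sub_im, Complex.one_re, Complex.one_im, e1, e2]
    nlinarith [Real.sin_sq_add_cos_sq θ]
  have hcos : t ^ 2 / 5 ≤ 1 - Real.cos θ := by
    have h1 := Real.cos_le_one_sub_mul_cos_sq (x := θ) hθ2
    have h2 : (2 : ℝ) / π ^ 2 ≥ 1 / 5 := by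
      rw [ge_iff_le, div_le_div_iff₀ (by norm_num) (by positivity)]
      nlinarith [Real.pi_lt_d2, Real.pi_pos]
    have h3 : t ^ 2 ≤ θ ^ 2 := by rw [← sq_abs θ]; gcongr
    nlinarith [sq_nonneg θ]
  have hrh : 1 / 2 ≤ r := by linarith
  have hlow : (1 - r) ^ 2 * (6 / 5) ≤ Complex.normSq (1 - q) := by
    rw [hn2]
    have : (1 - r) ^ 2 ≤ t ^ 2 := by
      have : 0 ≤ 1 - r := by linarith
      gcongr
    nlinarith [sq_nonneg t]
  have hnorm : (1 - r) * (20 / 19) ≤ ‖1 - q‖ := by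
    rw [Complex.norm_def]
    apply Real.le_sqrt_of_sq_le
    refine le_trans ?_ hlow
    nlinarith [sq_nonneg (1 - r)]
  have h1r : 0 < 1 - r := by linarith
  have hre : ((1 - q)⁻¹).re ≤ (19 / 20) * (1 - r)⁻¹ := by
    refine (Complex.re_le_norm _).trans ?_
    rw [norm_inv]
    calc (‖1 - q‖)⁻¹ ≤ ((1 - r) * (20 / 19))⁻¹ := by gcongr
      _ = _ := by rw [mul_inv]; ring
  have h6 : t⁻¹ ≤ (1 - r)⁻¹ := by gcongr
  have : 1 / (20 * t) = t⁻¹ / 20 := by field_simp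
  rw [this]; linarith


/-- exponent -/
noncomputable def Phi (k : ℕ) (x t : ℝ) (w : ℂ) (θ : ℝ) : ℂ :=
  x * Complex.exp w * Wc k ((Real.exp (-t) : ℝ) * Complex.exp (θ * Complex.I))
    - θ * Complex.I * (x * Ssum (k + 2) 1 t : ℝ) - (x * Ssum (k + 2) 0 t : ℝ) * (1 + w)

/-- first scale -/
noncomputable def bb (k : ℕ) (x t : ℝ) : ℝ := Real.sqrt (x * Ssum (k + 2) 0 t)
/-- second scale -/
noncomputable def ss (k : ℕ) (x t : ℝ) : ℝ := Real.sqrt (x * Ssum (k + 2) 2 t)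

lemma bb_sq (k : ℕ) {x t : ℝ} (hx : 0 < x) : bb k x t ^ 2 = x * Ssum (k + 2) 0 t :=
  Real.sq_sqrt (mul_nonneg hx.le (Ssum_nonneg _ _ _))
lemma ss_sq (k : ℕ) {x t : ℝ} (hx : 0 < x) : ss k x t ^ 2 = x * Ssum (k + 2) 2 t :=
  Real.sq_sqrt (mul_nonneg hx.le (Ssum_nonneg _ _ _))
lemma bb_pos (k : ℕ) {x t : ℝ} (hx : 0 < x) (ht : 0 < t) : 0 < bb k x t :=
  Real.sqrt_pos.mpr (mul_pos hx (Ssum_pos k 0 ht))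
lemma ss_pos (k : ℕ) {x t : ℝ} (hx : 0 < x) (ht : 0 < t) : 0 < ss k x t :=
  Real.sqrt_pos.mpr (mul_pos hx (Ssum_pos k 2 ht))

lemma Phi_re (k : ℕ) (x : ℝ) {t : ℝ} (ht : 0 < t) (w : ℂ) (θ : ℝ) :
    (Phi k x t w θ).re = -(Real.exp w.re * x * ∑' m : ℕ, lam k t m * (1 - Real.cos (w.im + m * θ)))
      + x * Ssum (k + 2) 0 t * (Real.exp w.re - 1 - w.re) := by
  have h1 := (Wc_hasSum k ht θ).mul_left (Complex.exp w)
  have h2 := Complex.hasSum_re h1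
  have e : ∀ m : ℕ, (Complex.exp w * ((lam k t m : ℂ) * Complex.exp ((m * θ : ℝ) * Complex.I))).re
      = Real.exp w.re * (lam k t m * Real.cos (w.im + m * θ)) := by
    intro m
    rw [show Complex.exp w * ((lam k t m : ℂ) * Complex.exp ((m * θ : ℝ) * Complex.I))
      = (lam k t m : ℂ) * Complex.exp (w + (m * θ : ℝ) * Complex.I) by rw [Complex.exp_add]; ring]
    rw [Complex.re_ofReal_mul, Complex.exp_re]
    simp
    ring
  simp only [e] at h2
  have h3 := ((lam_hasSum0 k ht).mul_left (Real.exp w.re)).sub h2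
  have h4 : ∑' m : ℕ, Real.exp w.re * (lam k t m * (1 - Real.cos (w.im + m * θ))) =
      Real.exp w.re * Ssum (k + 2) 0 t - (Complex.exp w * Wc k ((Real.exp (-t) : ℝ) * Complex.exp (θ * Complex.I))).re := by
    rw [← h3.tsum_eq]
    refine tsum_congr fun m => ?_
    ring
  rw [tsum_mul_left] at h4
  have h5 : (Phi k x t w θ).re = x * (Complex.exp w * Wc k ((Real.exp (-t) : ℝ) * Complex.exp (θ * Complex.I))).re
      - x * Ssum (k + 2) 0 t * (1 + w.re) := by
    unfold Phi
    rw [mul_assoc, Complex.sub_re, Complex.sub_re, Complex.re_ofReal_mul, Complex.re_ofReal_mul]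
    simp
  rw [h5]
  linear_combination x * h4

lemma cos_split (X Y : ℝ) : (1 - Real.cos X) / 2 - (1 - Real.cos Y) ≤ 1 - Real.cos (Y + X) := by
  have h1 : Real.cos X = Real.cos (Y + X) * Real.cos Y + Real.sin (Y + X) * Real.sin Y := by
    rw [← Real.cos_sub]; congr 1; ring
  generalize Y + X = Z at *
  rw [h1]
  nlinarith [sq_nonneg (Real.sin Z + Real.sin Y), Real.sin_sq_add_cos_sq Z, Real.sin_sq_add_cos_sq Y,
    sq_nonneg (1 - Real.cos Z + (1 - Real.cos Y)), sq_nonneg (Real.cos Z - Real.cos Y), sq_nonneg (Real.cos Z + Real.cos Y - 2)]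

lemma Phi_re_le (k : ℕ) {x t R : ℝ} (hx : 0 < x) (ht : 0 < t) (w : ℂ) (θ : ℝ) (hw : ‖w‖ ≤ 1)
    (hR : ‖w‖ ^ 2 * (x * Ssum (k + 2) 0 t) ≤ R) :
    (Phi k x t w θ).re ≤ -(x / 6 * Dsum k t θ) + 3 * R := by
  rw [Phi_re k x ht]
  set α := w.re
  set β := w.im
  set B := x * Ssum (k + 2) 0 t with hB
  have hB0 : 0 ≤ B := mul_nonneg hx.le (Ssum_nonneg _ _ _)
  have hα : |α| ≤ ‖w‖ := Complex.abs_re_le_norm w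
  have hβ : |β| ≤ ‖w‖ := Complex.abs_im_le_norm w
  have hα2 : α ^ 2 ≤ ‖w‖ ^ 2 := by rw [← sq_abs α]; gcongr
  have hβ2 : β ^ 2 ≤ ‖w‖ ^ 2 := by rw [← sq_abs β]; gcongr
  have hα1 : |α| ≤ 1 := hα.trans hw
  have e1 : Real.exp α - 1 - α ≤ α ^ 2 := by
    have := Real.abs_exp_sub_one_sub_id_le hα1
    exact (abs_le.mp this).2
  have e2 : Real.exp α ≤ 3 := by nlinarith [(abs_le.mp hα1).1, (abs_le.mp hα1).2]
  have e3 : 1 / 3 ≤ Real.exp α := by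
    have h1 : Real.exp (-α) - 1 - (-α) ≤ (-α) ^ 2 := by
      have := Real.abs_exp_sub_one_sub_id_le (x := -α) (by rwa [abs_neg])
      exact (abs_le.mp this).2
    have h2 : Real.exp (-α) ≤ 3 := by nlinarith [(abs_le.mp hα1).1, (abs_le.mp hα1).2]
    have h3 : Real.exp α * Real.exp (-α) = 1 := by rw [← Real.exp_add]; simp
    nlinarith [Real.exp_pos α]
  have e4 : Dsum k t θ / 2 - (β ^ 2 / 2) * Ssum (k + 2) 0 t ≤ ∑' m : ℕ, lam k t m * (1 - Real.cos (β + m * θ)) := by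
    have s1 := ((D_summable k ht θ).hasSum.div_const 2).sub ((lam_hasSum0 k ht).mul_left (β ^ 2 / 2))
    refine hasSum_le (fun m => ?_) s1 (D_summable' k ht θ β).hasSum
    have := cos_split (m * θ) β
    have h2 := Real.one_sub_sq_div_two_le_cos (x := β)
    have h3 := lam_nonneg k t m
    calc lam k t m * (1 - Real.cos (m * θ)) / 2 - β ^ 2 / 2 * lam k t m
        = lam k t m * ((1 - Real.cos (m * θ)) / 2 - β ^ 2 / 2) := by ring
      _ ≤ _ := mul_le_mul_of_nonneg_left (by linarith) h3
  have e5 : 0 ≤ Dsum k t θ := tsum_nonneg fun m => D_term_nonneg k t θ m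
  have e6 : B * (Real.exp α - 1 - α) ≤ R := by nlinarith
  have hβB : β ^ 2 * B ≤ R := by nlinarith
  have e7 : Real.exp α * x * (Dsum k t θ / 2 - (β ^ 2 / 2) * Ssum (k + 2) 0 t) ≤
      Real.exp α * x * ∑' m : ℕ, lam k t m * (1 - Real.cos (β + m * θ)) := by gcongr
  have e8 : Real.exp α * x * (Dsum k t θ / 2 - (β ^ 2 / 2) * Ssum (k + 2) 0 t) =
     Real.exp α * (x * Dsum k t θ / 2) - Real.exp α * ((β ^ 2 * B) / 2) := by rw [hB]; ring
  have e9 : 1 / 3 * (x * Dsum k t θ / 2) ≤ Real.exp α * (x * Dsum k t θ / 2) := by gcongr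
  have e10 : Real.exp α * ((β ^ 2 * B) / 2) ≤ 3 * (R / 2) := by gcongr
  have hR0 : 0 ≤ R := le_trans (by positivity) hR
  linarith

lemma exp_lower (j : ℕ) {y : ℝ} (hy : 0 < y) : Real.exp (-y) ≤ (j.factorial : ℝ) / y ^ j := by
  have := Real.pow_div_factorial_le_exp y hy.le j
  rw [Real.exp_neg, ← inv_div]
  gcongr

lemma dominated (k : ℕ) {x : ℝ} (hx : 0 < x) (R : ℝ) : ∃ C : ℝ, 0 < C ∧ ∀ᶠ t in 𝓝[>] (0:ℝ),
    ∀ z : ℂ, ‖z‖ ≤ R → ∀ u : ℝ, |u| ≤ π * ss k x t →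
      ‖Complex.exp (Phi k x t (z / bb k x t) (u / ss k x t))‖ ≤ C * (1 + u ^ 2)⁻¹ := by
  set Q := ((k + 2).factorial : ℝ) * Zcon k * x + 1 with hQ
  have hQ0 : 0 < Q := by have := Zcon_pos k; positivity
  have hS2 : ∀ᶠ t in 𝓝[>] (0:ℝ), t ^ (k + 3) * (x * Ssum (k + 2) 2 t) < Q := by
    have := (S_tendsto k 2).mul_const x
    refine ((this.eventually_lt_const (u := Q) (by rw [hQ]; linarith))).mono fun t ht => ?_
    calc _ = t ^ (k + 2 + 1) * Ssum (k + 2) 2 t * x := by ring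
      _ < Q := ht
  have hS2' : ∀ᶠ t in 𝓝[>] (0:ℝ), 1 ≤ x * Ssum (k + 2) 2 t := by
    refine ((Ssum_tendsto_atTop k 2).eventually_ge_atTop (1 / x)).mono fun t ht => ?_
    rwa [div_le_iff₀' hx] at ht
  have hS0 : ∀ᶠ t in 𝓝[>] (0:ℝ), R ^ 2 ≤ x * Ssum (k + 2) 0 t := by
    refine ((Ssum_tendsto_atTop k 0).eventually_ge_atTop (R ^ 2 / x)).mono fun t ht => ?_
    rwa [div_le_iff₀' hx] at ht
  -- constants
  set c1 := x / 6 * (Real.exp (-1) / 5 * (1 / 4) ^ (k + 3) / Q) with hc1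
  have hc1' : 0 < c1 := by positivity
  set c2 := x / 120 with hc2
  set C2 := ((k + 3).factorial : ℝ) / c2 ^ (k + 3) * (Q * (1 + π ^ 2)) with hC2
  set C1 := 1 + 1 / c1 with hC1
  refine ⟨Real.exp (3 * R ^ 2) * (C1 + C2), by positivity, ?_⟩
  have hsmall : ∀ᶠ t in 𝓝[>] (0:ℝ), 0 < t ∧ t ≤ 1 / 2 := by
    filter_upwards [Ioc_mem_nhdsGT (show (0:ℝ) < 1 / 2 by norm_num)] with t ht using ht
  filter_upwards [hS2, hS2', hS0, hsmall] with t h2 h2' h0 ⟨ht, ht2⟩ z hz u hu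
  have hb := bb_pos k hx ht
  have hs := ss_pos k hx ht
  have hs2 := ss_sq k (t := t) hx
  have hb2 := bb_sq k (t := t) hx
  have hwn : ‖z / bb k x t‖ = ‖z‖ / bb k x t := by
    rw [norm_div, Complex.norm_real, Real.norm_of_nonneg hb.le]
  have hR0 : 0 ≤ R := (norm_nonneg z).trans hz
  have hRb : R ≤ bb k x t := by
    refine abs_le_of_sq_le_sq' ?_ hb.le |>.2
    rw [hb2]; exact h0
  have hre := Phi_re_le k (R := R ^ 2) hx ht (z / bb k x t) (u / ss k x t)
    (by rw [hwn, div_le_one hb]; linarith)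
    (by rw [hwn, ← hb2, div_pow, div_mul_cancel₀ _ (by positivity)]; gcongr)
  rw [Complex.norm_exp]
  set D := Dsum k t (u / ss k x t)
  have hpos : 0 < 1 + u ^ 2 := by positivity
  have hmain : Real.exp (-(x / 6 * D)) ≤ (C1 + C2) * (1 + u ^ 2)⁻¹ := by
    by_cases hcase : |u / ss k x t| ≤ t
    · have hD := D_lower1 k ht ht2 hcase
      have : c1 * u ^ 2 ≤ x / 6 * D := by
        rw [hc1, mul_assoc]
        refine mul_le_mul_of_nonneg_left (le_trans ?_ hD) (by positivity)
        rw [div_pow u, hs2]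
        have hX : 0 < x * Ssum (k + 2) 2 t := by linarith
        rw [show (1 / (4 * t)) ^ (k + 3) = (1 / 4) ^ (k + 3) / t ^ (k + 3) by rw [← div_pow]; congr 1; field_simp]
        have h3 : 1 / Q ≤ 1 / (t ^ (k + 3) * (x * Ssum (k + 2) 2 t)) := by gcongr
        calc Real.exp (-1) / 5 * (1 / 4) ^ (k + 3) / Q * u ^ 2 =
            (Real.exp (-1) / 5 * (1 / 4) ^ (k + 3) * u ^ 2) * (1 / Q) := by ring
          _ ≤ (Real.exp (-1) / 5 * (1 / 4) ^ (k + 3) * u ^ 2) * (1 / (t ^ (k + 3) * (x * Ssum (k + 2) 2 t))) := by gcongr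
          _ = _ := by field_simp
      have h4 : Real.exp (-(x / 6 * D)) ≤ Real.exp (-(c1 * u ^ 2)) := Real.exp_le_exp.mpr (by linarith)
      have h5 : Real.exp (-(c1 * u ^ 2)) ≤ C1 * (1 + u ^ 2)⁻¹ := by
        rw [Real.exp_neg, ← div_eq_mul_inv, le_div_iff₀ hpos, inv_mul_le_iff₀ (Real.exp_pos _)]
        have := Real.add_one_le_exp (c1 * u ^ 2)
        have h6 : 1 + u ^ 2 ≤ (c1 * u ^ 2 + 1) * C1 := by
          rw [hC1]
          have : (c1 * u ^ 2 + 1) * (1 + 1 / c1) = c1 * u ^ 2 + u ^ 2 + 1 + 1 / c1 := by field_simp; ring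
          rw [this]
          have : 0 ≤ c1 * u ^ 2 := by positivity
          have : 0 < 1 / c1 := by positivity
          linarith
        have : 0 < C1 := by positivity
        nlinarith
      have h7 : 0 ≤ C2 * (1 + u ^ 2)⁻¹ := by positivity
      linarith [add_mul C1 C2 ((1 + u ^ 2)⁻¹)]
    · push Not at hcase
      have hD := D_lower2 k ht ht2 hcase.le (by
        rw [abs_div, abs_of_pos hs, div_le_iff₀ hs]; exact hu)
      have h3 : c2 / t ≤ x / 6 * D := by
        calc c2 / t = x / 6 * (1 / (20 * t)) := by rw [hc2]; field_simp; norm_num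
          _ ≤ _ := by gcongr
      have h4 : Real.exp (-(x / 6 * D)) ≤ Real.exp (-(c2 / t)) := Real.exp_le_exp.mpr (by linarith)
      have h5 := exp_lower (k + 3) (y := c2 / t) (by positivity)
      have h6 : t ^ (k + 3) ≤ Q * (1 + π ^ 2) * (1 + u ^ 2)⁻¹ := by
        rw [← div_eq_mul_inv, le_div_iff₀ hpos]
        have : u ^ 2 ≤ π ^ 2 * (x * Ssum (k + 2) 2 t) := by
          rw [← hs2, ← mul_pow, ← sq_abs u]; gcongr
        have h7 : 1 + u ^ 2 ≤ (1 + π ^ 2) * (x * Ssum (k + 2) 2 t) := by linarith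
        calc t ^ (k + 3) * (1 + u ^ 2) ≤ t ^ (k + 3) * ((1 + π ^ 2) * (x * Ssum (k + 2) 2 t)) := by gcongr
          _ = (t ^ (k + 3) * (x * Ssum (k + 2) 2 t)) * (1 + π ^ 2) := by ring
          _ ≤ Q * (1 + π ^ 2) := by gcongr
      have h8 : ((k + 3).factorial : ℝ) / (c2 / t) ^ (k + 3) = ((k + 3).factorial : ℝ) / c2 ^ (k + 3) * t ^ (k + 3) := by
        rw [div_pow]; field_simp
      have h9 : Real.exp (-(c2 / t)) ≤ C2 * (1 + u ^ 2)⁻¹ := by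
        rw [h8] at h5
        refine h5.trans ?_
        rw [hC2, mul_assoc _ (Q * (1 + π ^ 2))]
        gcongr
      have h10 : 0 ≤ C1 * (1 + u ^ 2)⁻¹ := by positivity
      linarith [add_mul C1 C2 ((1 + u ^ 2)⁻¹)]
  calc Real.exp _ ≤ Real.exp (-(x / 6 * D) + 3 * R ^ 2) := Real.exp_le_exp.mpr hre
    _ = Real.exp (3 * R ^ 2) * Real.exp (-(x / 6 * D)) := by rw [Real.exp_add, mul_comm]
    _ ≤ Real.exp (3 * R ^ 2) * ((C1 + C2) * (1 + u ^ 2)⁻¹) := by gcongr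
    _ = _ := by ring


lemma exp_I_cubic (y : ℝ) : ‖Complex.exp (y * Complex.I) - 1 - y * Complex.I + (y : ℂ) ^ 2 / 2‖ ≤ 4 * |y| ^ 3 := by
  by_cases h : |y| ≤ 1
  · have h1 := Complex.norm_exp_sub_sum_le_norm_mul_exp (y * Complex.I) 3
    have e : Complex.exp (y * Complex.I) - ∑ m ∈ Finset.range 3, (y * Complex.I) ^ m / (m.factorial : ℂ)
      = Complex.exp (y * Complex.I) - 1 - y * Complex.I + (y : ℂ) ^ 2 / 2 := by
      simp [Finset.sum_range_succ, mul_pow, Nat.factorial]; ring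
    rw [e] at h1
    have n1 : ‖(y : ℂ) * Complex.I‖ = |y| := by simp
    rw [n1] at h1
    refine h1.trans ?_
    rw [mul_comm]
    gcongr
    calc Real.exp |y| ≤ Real.exp 1 := Real.exp_le_exp.mpr h
      _ ≤ 4 := by linarith [Real.exp_one_lt_d9]
  · push Not at h
    have n1 : ‖(y : ℂ) * Complex.I‖ = |y| := by simp
    have n2 : ‖(y : ℂ) ^ 2 / 2‖ = |y| ^ 2 / 2 := by simp
    have n3 := Complex.norm_exp_ofReal_mul_I y
    calc _ ≤ ‖Complex.exp (y * Complex.I)‖ + ‖(1 : ℂ)‖ + ‖(y : ℂ) * Complex.I‖ + ‖(y : ℂ) ^ 2 / 2‖ :=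
          (norm_add_le _ _).trans (by gcongr; exact (norm_sub_le _ _).trans (by gcongr; exact norm_sub_le _ _))
      _ = 1 + 1 + |y| + |y| ^ 2 / 2 := by rw [n1, n2, n3, norm_one]
      _ ≤ 4 * |y| ^ 3 := by
        have : |y| ^ 2 ≤ |y| ^ 3 := pow_le_pow_right₀ h.le (by norm_num)
        nlinarith

/-- centred sum -/
noncomputable def Tc (k : ℕ) (x t θ : ℝ) : ℂ :=
  x * Wc k ((Real.exp (-t) : ℝ) * Complex.exp (θ * Complex.I)) - (x * Ssum (k + 2) 0 t : ℝ)
    - θ * Complex.I * (x * Ssum (k + 2) 1 t : ℝ)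

lemma Tc_bound (k : ℕ) {x t : ℝ} (hx : 0 < x) (ht : 0 < t) (θ : ℝ) :
    ‖Tc k x t θ + (θ : ℂ) ^ 2 / 2 * (x * Ssum (k + 2) 2 t : ℝ)‖ ≤ 4 * |θ| ^ 3 * (x * Ssum (k + 2) 3 t) := by
  have hc : ∀ j, HasSum (fun m : ℕ => (lam k t m : ℂ) * (m : ℂ) ^ j) (Ssum (k + 2) j t : ℂ) := fun j => by
    have := Complex.hasSum_ofReal.mpr (lam_hasSum k j ht)
    simpa using this
  have h1 := (((Wc_hasSum k ht θ).sub (hc 0)).sub ((hc 1).mul_left (θ * Complex.I))).add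
    ((hc 2).mul_left ((θ : ℂ) ^ 2 / 2))
  have h2 := (lam_hasSum k 3 ht).mul_left (4 * |θ| ^ 3)
  have h3 := HasSum.norm_le_of_bounded h1 h2 (fun m => by
    have := exp_I_cubic (m * θ)
    have e : (lam k t m : ℂ) * Complex.exp ((m * θ : ℝ) * Complex.I) - (lam k t m : ℂ) * (m : ℂ) ^ 0 -
        θ * Complex.I * ((lam k t m : ℂ) * (m : ℂ) ^ 1) + (θ : ℂ) ^ 2 / 2 * ((lam k t m : ℂ) * (m : ℂ) ^ 2)
        = (lam k t m : ℂ) * (Complex.exp ((m * θ : ℝ) * Complex.I) - 1 - (m * θ : ℝ) * Complex.I + ((m * θ : ℝ) : ℂ) ^ 2 / 2) := by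
      push_cast; ring
    rw [e, norm_mul, Complex.norm_real, Real.norm_of_nonneg (lam_nonneg _ _ _)]
    calc _ ≤ lam k t m * (4 * |(m : ℝ) * θ| ^ 3) := by gcongr; exact lam_nonneg _ _ _
      _ = _ := by rw [abs_mul, Nat.abs_cast]; ring)
  have e : Tc k x t θ + (θ : ℂ) ^ 2 / 2 * (x * Ssum (k + 2) 2 t : ℝ) = x * (Wc k ((Real.exp (-t) : ℝ) * Complex.exp (θ * Complex.I))
     - (Ssum (k + 2) 0 t : ℂ) - θ * Complex.I * (Ssum (k + 2) 1 t : ℂ) + (θ : ℂ) ^ 2 / 2 * (Ssum (k + 2) 2 t : ℂ)) := by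
    unfold Tc; push_cast; ring
  rw [e, norm_mul, Complex.norm_real, Real.norm_of_nonneg hx.le]
  calc _ ≤ x * (4 * |θ| ^ 3 * Ssum (k + 2) 3 t) := by gcongr
    _ = _ := by ring

/-- correlation -/
noncomputable def rho (k : ℕ) : ℝ := Real.sqrt (((k : ℝ) + 1) / (k + 2))

lemma rho_lim (k : ℕ) {x : ℝ} (hx : 0 < x) :
    Tendsto (fun t => x * Ssum (k + 2) 1 t / (ss k x t * bb k x t)) (𝓝[>] 0) (𝓝 (rho k)) := by
  have h0 := S_tendsto k 0
  have h1 := S_tendsto k 1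
  have h2 := S_tendsto k 2
  have hZ := Zcon_pos k
  have hl : ((((k + 1).factorial : ℝ) * Zcon k) ^ 2) / ((((k + 0).factorial : ℝ) * Zcon k) * (((k + 2).factorial : ℝ) * Zcon k)) = ((k : ℝ) + 1) / (k + 2) := by
    rw [add_zero, Nat.factorial_succ (k + 1), Nat.factorial_succ k]
    have : (k.factorial : ℝ) ≠ 0 := by positivity
    push_cast
    have h3 : ((k : ℝ) + 1 + 1) ≠ 0 := by positivity
    have h4 : ((k : ℝ) + 2) ≠ 0 := by positivity
    field_simp
    ring
  have h3 := (h1.pow 2).div (h0.mul h2) (by positivity)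
  rw [hl] at h3
  have h4 := h3.sqrt
  refine h4.congr' ?_
  filter_upwards [self_mem_nhdsWithin] with t (ht : 0 < t)
  have p0 := Ssum_pos k 0 ht
  have p1 := Ssum_pos k 1 ht
  have p2 := Ssum_pos k 2 ht
  have hs := ss_pos k hx ht
  have hb := bb_pos k hx ht
  simp only [Pi.div_apply]
  rw [Real.sqrt_eq_iff_mul_self_eq (by positivity) (by positivity), ← sq, div_pow, mul_pow (ss k x t), ss_sq k hx, bb_sq k hx]
  field_simp
  ring

lemma cubic_lim (k : ℕ) {x : ℝ} (hx : 0 < x) :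
    Tendsto (fun t => x * Ssum (k + 2) 3 t / ss k x t ^ 3) (𝓝[>] 0) (𝓝 0) := by
  have h2 := S_tendsto k 2
  have h3 := S_tendsto k 3
  have hZ := Zcon_pos k
  have hid : Tendsto (fun t : ℝ => t ^ (k + 1) / x) (𝓝[>] 0) (𝓝 0) := by
    have : Tendsto (fun t : ℝ => t ^ (k + 1) / x) (𝓝 0) (𝓝 (0 ^ (k + 1) / x)) := by
      apply Continuous.tendsto; fun_prop
    simp at this
    exact this.mono_left nhdsWithin_le_nhds
  have h4 := (hid.mul ((h3.pow 2).div (h2.pow 3) (by positivity))).sqrt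
  simp only [zero_mul, Real.sqrt_zero] at h4
  refine h4.congr' ?_
  filter_upwards [self_mem_nhdsWithin] with t (ht : 0 < t)
  have p3 := Ssum_pos k 3 ht
  have p2 := Ssum_pos k 2 ht
  have hs := ss_pos k hx ht
  simp only [Pi.div_apply]
  rw [Real.sqrt_eq_iff_mul_self_eq (by positivity) (by positivity), ← sq, div_pow, ← pow_mul, mul_comm 3 2, pow_mul, ss_sq k hx]
  field_simp
  ring

lemma bb_lim (k : ℕ) {x : ℝ} (hx : 0 < x) : Tendsto (bb k x) (𝓝[>] 0) atTop :=
  Real.tendsto_sqrt_atTop.comp ((Ssum_tendsto_atTop k 0).const_mul_atTop hx)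
lemma ss_lim (k : ℕ) {x : ℝ} (hx : 0 < x) : Tendsto (ss k x) (𝓝[>] 0) atTop :=
  Real.tendsto_sqrt_atTop.comp ((Ssum_tendsto_atTop k 2).const_mul_atTop hx)

lemma exp_sub_lim {b : ℕ → ℝ} (hb : Tendsto b atTop atTop) {z : ℕ → ℂ} {z0 : ℂ} (hz : Tendsto z atTop (𝓝 z0)) :
    Tendsto (fun n => (Complex.exp (z n / b n) - 1 - z n / b n) * (b n : ℂ) ^ 2) atTop (𝓝 (z0 ^ 2 / 2)) := by
  have hbi : Tendsto (fun n => (b n)⁻¹) atTop (𝓝 0) := tendsto_inv_atTop_zero.comp hb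
  have hw : Tendsto (fun n => ‖z n‖ * (b n)⁻¹) atTop (𝓝 (‖z0‖ * 0)) := hz.norm.mul hbi
  have hbound : Tendsto (fun n => ‖z n‖ ^ 3 * Real.exp (‖z n‖ * (b n)⁻¹) * (b n)⁻¹) atTop (𝓝 0) := by
    have := ((hz.norm.pow 3).mul ((Real.continuous_exp.tendsto _).comp hw)).mul hbi
    simpa using this
  have h1 : Tendsto (fun n => (Complex.exp (z n / b n) - 1 - z n / b n) * (b n : ℂ) ^ 2 - z n ^ 2 / 2) atTop (𝓝 0) := by
    refine squeeze_zero_norm' ?_ hbound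
    filter_upwards [hb.eventually_gt_atTop 0] with n hn
    have hbc : (b n : ℂ) ≠ 0 := by exact_mod_cast hn.ne'
    have h2 := Complex.norm_exp_sub_sum_le_norm_mul_exp (z n / b n) 3
    have e : Complex.exp (z n / b n) - ∑ m ∈ Finset.range 3, (z n / b n) ^ m / (m.factorial : ℂ)
      = Complex.exp (z n / b n) - 1 - z n / b n - (z n / b n) ^ 2 / 2 := by
      simp [Finset.sum_range_succ, Nat.factorial]; ring
    have e2 : (Complex.exp (z n / b n) - 1 - z n / b n) * (b n : ℂ) ^ 2 - z n ^ 2 / 2 =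
      (Complex.exp (z n / b n) - 1 - z n / b n - (z n / b n) ^ 2 / 2) * (b n : ℂ) ^ 2 := by
      field_simp
    have n1 : ‖z n / b n‖ = ‖z n‖ * (b n)⁻¹ := by
      rw [norm_div, Complex.norm_real, Real.norm_of_nonneg hn.le, div_eq_mul_inv]
    have n2 : ‖(b n : ℂ) ^ 2‖ = b n ^ 2 := by rw [norm_pow, Complex.norm_real, Real.norm_of_nonneg hn.le]
    rw [e, n1] at h2
    rw [e2, norm_mul, n2]
    calc _ ≤ (‖z n‖ * (b n)⁻¹) ^ 3 * Real.exp (‖z n‖ * (b n)⁻¹) * b n ^ 2 := by gcongr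
      _ = _ := by field_simp
  have h2 := h1.add ((hz.pow 2).div_const 2)
  simpa using h2

lemma Phi_lim (k : ℕ) {x : ℝ} (hx : 0 < x) {t : ℕ → ℝ} (ht : Tendsto t atTop (𝓝[>] 0))
    {z : ℕ → ℂ} {z0 : ℂ} (hz : Tendsto z atTop (𝓝 z0)) (u : ℝ) :
    Tendsto (fun n => Phi k x (t n) (z n / bb k x (t n)) (u / ss k x (t n))) atTop
      (𝓝 (-(u : ℂ) ^ 2 / 2 + z0 * (u * Complex.I * rho k) + z0 ^ 2 / 2)) := by
  have hb : Tendsto (fun n => bb k x (t n)) atTop atTop := (bb_lim k hx).comp ht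
  have hbi : Tendsto (fun n => ((bb k x (t n))⁻¹ : ℝ)) atTop (𝓝 0) := tendsto_inv_atTop_zero.comp hb
  have hbic : Tendsto (fun n => (((bb k x (t n))⁻¹ : ℝ) : ℂ)) atTop (𝓝 0) := by
    have := (Complex.continuous_ofReal.tendsto _).comp hbi
    rwa [Complex.ofReal_zero] at this
  have h3 := exp_sub_lim hb hz
  have hpos : ∀ᶠ n in atTop, 0 < t n := (tendsto_nhdsWithin_iff.mp ht).2
  -- first factor tends to one
  have hw : Tendsto (fun n => z n / bb k x (t n)) atTop (𝓝 0) := by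
    have := hz.mul hbic
    simp only [mul_zero] at this
    refine this.congr fun n => ?_
    push_cast; rw [div_eq_mul_inv]
  have hew : Tendsto (fun n => Complex.exp (z n / bb k x (t n))) atTop (𝓝 1) := by
    have := (Complex.continuous_exp.tendsto _).comp hw
    rwa [Complex.exp_zero] at this
  have hT : Tendsto (fun n => Tc k x (t n) (u / ss k x (t n))) atTop (𝓝 (-(u : ℂ) ^ 2 / 2)) := by
    have hz0 : Tendsto (fun n => Tc k x (t n) (u / ss k x (t n)) + (u : ℂ) ^ 2 / 2) atTop (𝓝 0) := by
      have hcub : Tendsto (fun n => 4 * |u| ^ 3 * (x * Ssum (k + 2) 3 (t n) / ss k x (t n) ^ 3)) atTop (𝓝 0) := by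
        simpa using ((cubic_lim k hx).comp ht).const_mul (4 * |u| ^ 3)
      refine squeeze_zero_norm' ?_ hcub
      filter_upwards [hpos] with n hn
      have hs := ss_pos k hx hn
      have hb1 := Tc_bound k hx hn (u / ss k x (t n))
      have e : (((u / ss k x (t n) : ℝ) : ℂ)) ^ 2 / 2 * (x * Ssum (k + 2) 2 (t n) : ℝ) = (u : ℂ) ^ 2 / 2 := by
        rw [← ss_sq k hx]
        have : (ss k x (t n) : ℂ) ≠ 0 := by exact_mod_cast hs.ne'
        push_cast
        field_simp
      rw [e] at hb1
      refine hb1.trans (le_of_eq ?_)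
      rw [abs_div, abs_of_pos hs, div_pow]; ring
    have := hz0.sub_const ((u : ℂ) ^ 2 / 2)
    simp only [add_sub_cancel_right, zero_sub] at this
    rwa [neg_div]
  have h1b : Tendsto (fun n => (Complex.exp (z n / bb k x (t n)) - 1) * (bb k x (t n) : ℂ)) atTop (𝓝 z0) := by
    have := (h3.mul hbic).add hz
    simp only [mul_zero, zero_add] at this
    refine this.congr' ?_
    filter_upwards [hpos] with n hn
    have : (bb k x (t n) : ℂ) ≠ 0 := by exact_mod_cast (bb_pos k hx hn).ne'
    push_cast
    field_simp
    ring
  have hrc : Tendsto (fun n => ((x * Ssum (k + 2) 1 (t n) / (ss k x (t n) * bb k x (t n)) : ℝ) : ℂ)) atTop (𝓝 (rho k)) :=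
    (Complex.continuous_ofReal.tendsto _).comp ((rho_lim k hx).comp ht)
  have h2 := h1b.mul (hrc.const_mul (u * Complex.I))
  have hall := ((hew.mul hT).add h2).add h3
  rw [one_mul] at hall
  refine hall.congr' ?_
  filter_upwards [hpos] with n hn
  have hbc : (bb k x (t n) : ℂ) ≠ 0 := by exact_mod_cast (bb_pos k hx hn).ne'
  have hsc : (ss k x (t n) : ℂ) ≠ 0 := by exact_mod_cast (ss_pos k hx hn).ne'
  have hb2 : (bb k x (t n) : ℂ) ^ 2 = (x * Ssum (k + 2) 0 (t n) : ℝ) := by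
    rw [← bb_sq k hx]; push_cast; rfl
  have e2 : (Complex.exp (z n / bb k x (t n)) - 1) * (bb k x (t n) : ℂ) *
      (u * Complex.I * ((x * Ssum (k + 2) 1 (t n) / (ss k x (t n) * bb k x (t n)) : ℝ) : ℂ)) =
      (Complex.exp (z n / bb k x (t n)) - 1) * ((u / ss k x (t n) : ℝ) * Complex.I * (x * Ssum (k + 2) 1 (t n) : ℝ)) := by
    push_cast
    field_simp
  rw [hb2, e2]
  unfold Phi Tc
  ring


lemma Phi_cont (k : ℕ) (x : ℝ) {t : ℝ} (ht : 0 < t) (w : ℂ) : Continuous (Phi k x t w) := by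
  have h1 : Continuous (fun θ : ℝ => Wc k ((Real.exp (-t) : ℝ) * Complex.exp (θ * Complex.I))) := by
    refine (Wc_diff k).continuousOn.comp_continuous (by fun_prop) fun θ => ?_
    rw [mem_ball_zero_iff, norm_mul, Complex.norm_exp_ofReal_mul_I, mul_one, Complex.norm_real,
      Real.norm_of_nonneg (Real.exp_pos _).le, Real.exp_lt_one_iff]
    linarith
  unfold Phi
  fun_prop

/-- rescaled integral -/
noncomputable def Nint (k : ℕ) (x t : ℝ) (z : ℂ) : ℂ :=
  ∫ u in (-(π * ss k x t))..(π * ss k x t), Complex.exp (Phi k x t (z / bb k x t) (u / ss k x t))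

lemma rho_sq (k : ℕ) : (rho k) ^ 2 = ((k : ℝ) + 1) / (k + 2) := Real.sq_sqrt (by positivity)

lemma Nint_lim (k : ℕ) {x : ℝ} (hx : 0 < x) {t : ℕ → ℝ} (ht : Tendsto t atTop (𝓝[>] 0))
    {z : ℕ → ℂ} {z0 : ℂ} (hz : Tendsto z atTop (𝓝 z0)) :
    Tendsto (fun n => Nint k x (t n) (z n)) atTop
      (𝓝 (((2 * π : ℝ) : ℂ) ^ (1 / 2 : ℂ) * Complex.exp (z0 ^ 2 / (2 * (k + 2))))) := by
  have hpos : ∀ᶠ n in atTop, 0 < t n := (tendsto_nhdsWithin_iff.mp ht).2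
  obtain ⟨C, hC, hdom⟩ := dominated k hx (‖z0‖ + 1)
  have hdom' := ht.eventually hdom
  have hzn : ∀ᶠ n in atTop, ‖z n‖ ≤ ‖z0‖ + 1 := hz.norm.eventually_le_const (by linarith)
  have hgauss : ∫ u : ℝ, Complex.exp (-(u : ℂ) ^ 2 / 2 + z0 * (u * Complex.I * rho k) + z0 ^ 2 / 2) =
      ((2 * π : ℝ) : ℂ) ^ (1 / 2 : ℂ) * Complex.exp (z0 ^ 2 / (2 * (k + 2))) := by
    have := integral_cexp_quadratic (b := -1 / 2) (by norm_num) (z0 * Complex.I * rho k) (z0 ^ 2 / 2)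
    have e1 : (π : ℂ) / -(-1 / 2) = ((2 * π : ℝ) : ℂ) := by push_cast; ring
    have hr : (rho k : ℂ) ^ 2 = ((k : ℂ) + 1) / (k + 2) := by
      have := rho_sq k
      rw [← Complex.ofReal_pow, this]; push_cast; rfl
    have e2 : z0 ^ 2 / 2 - (z0 * Complex.I * rho k) ^ 2 / (4 * (-1 / 2)) = z0 ^ 2 / (2 * (k + 2)) := by
      rw [mul_pow, mul_pow, Complex.I_sq, hr]
      have : (k : ℂ) + 2 ≠ 0 := by exact_mod_cast (show k + 2 ≠ 0 by omega)
      field_simp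
      ring
    rw [e1, e2] at this
    rw [← this]
    congr 1
    funext u
    congr 1
    ring
  rw [← hgauss]
  have hconv : Tendsto (fun n => ∫ u : ℝ, Set.indicator (Set.Ioc (-(π * ss k x (t n))) (π * ss k x (t n)))
      (fun u => Complex.exp (Phi k x (t n) (z n / bb k x (t n)) (u / ss k x (t n)))) u) atTop
      (𝓝 (∫ u : ℝ, Complex.exp (-(u : ℂ) ^ 2 / 2 + z0 * (u * Complex.I * rho k) + z0 ^ 2 / 2))) := by
    refine tendsto_integral_filter_of_dominated_convergence (fun u => C * (1 + u ^ 2)⁻¹) ?_ ?_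
      (integrable_inv_one_add_sq.const_mul C) ?_
    · filter_upwards [hpos] with n hn
      refine (Continuous.aestronglyMeasurable ?_).indicator measurableSet_Ioc
      exact Complex.continuous_exp.comp ((Phi_cont k x hn _).comp (by fun_prop))
    · filter_upwards [hpos, hdom', hzn] with n hn hd hzz
      refine Eventually.of_forall fun u => ?_
      by_cases hu : u ∈ Set.Ioc (-(π * ss k x (t n))) (π * ss k x (t n))
      · rw [Set.indicator_of_mem hu]
        exact hd (z n) hzz u (abs_le.mpr ⟨hu.1.le, hu.2⟩)
      · rw [Set.indicator_of_notMem hu, norm_zero]; positivity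
    · refine Eventually.of_forall fun u => ?_
      have h1 := (Complex.continuous_exp.tendsto _).comp (Phi_lim k hx ht hz u)
      refine h1.congr' ?_
      have hst : Tendsto (fun n => π * ss k x (t n)) atTop atTop :=
        ((ss_lim k hx).comp ht).const_mul_atTop Real.pi_pos
      filter_upwards [hst.eventually_gt_atTop |u|] with n hn
      rw [Set.indicator_of_mem]
      · rfl
      · have := abs_lt.mp hn
        exact ⟨by linarith, by linarith⟩
  refine hconv.congr' ?_
  filter_upwards [hpos] with n hn
  have hs := ss_pos k hx hn
  unfold Nint
  rw [intervalIntegral.integral_of_le (by have := mul_pos Real.pi_pos hs; linarith), integral_indicator measurableSet_Ioc]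

lemma Nint_Hc (k n : ℕ) {x t : ℝ} (hx : 0 < x) (ht : 0 < t) (hn : x * Ssum (k + 2) 1 t = n) (z : ℂ) :
    Nint k x t z = (2 * π * ss k x t : ℝ) * (Real.exp (-t) : ℂ) ^ n * Complex.exp (-(x * Ssum (k + 2) 0 t : ℝ)) *
      (Complex.exp (-(z / bb k x t * (x * Ssum (k + 2) 0 t : ℝ))) * Hc (k + 2) n (x * Complex.exp (z / bb k x t))) := by
  have hs := ss_pos k hx ht
  have h1 := cauchy_Hc k n (x * Complex.exp (z / bb k x t)) (Real.exp (-t)) (Real.exp_pos _)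
    (by rw [Real.exp_lt_one_iff]; linarith)
  set w := z / bb k x t
  have hN : Nint k x t z = (ss k x t : ℂ) * ∫ θ in (-π)..π, Complex.exp (Phi k x t w θ) := by
    unfold Nint
    rw [intervalIntegral.integral_comp_div (fun θ : ℝ => Complex.exp (Phi k x t w θ)) hs.ne', neg_div,
      mul_div_cancel_right₀ _ hs.ne', Complex.real_smul]
  have h2 : ∫ θ in (-π)..π, Complex.exp (Phi k x t w θ) = Complex.exp (-((x * Ssum (k + 2) 0 t : ℝ) * (1 + w))) *
      ∫ θ in (-π)..π, Gf k (x * Complex.exp w) ((Real.exp (-t) : ℝ) * Complex.exp (θ * Complex.I)) * Complex.exp (-(n * (θ * Complex.I))) := by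
    rw [← intervalIntegral.integral_const_mul]
    refine intervalIntegral.integral_congr fun θ _ => ?_
    simp only [Gf]
    rw [← Complex.exp_add, ← Complex.exp_add]
    congr 1
    unfold Phi
    rw [hn]
    push_cast
    ring
  have hpi : (π : ℂ) ≠ 0 := by exact_mod_cast Real.pi_ne_zero
  rw [hN, h2]
  have h3 : ∫ θ in (-π)..π, Gf k (x * Complex.exp w) ((Real.exp (-t) : ℝ) * Complex.exp (θ * Complex.I)) * Complex.exp (-(n * (θ * Complex.I)))
    = 2 * π * (((Real.exp (-t) : ℝ) : ℂ) ^ n * Hc (k + 2) n (x * Complex.exp w)) := by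
    rw [h1, ← mul_assoc, mul_one_div_cancel (by simp), one_mul]
  rw [h3, show -(((x * Ssum (k + 2) 0 t : ℝ) : ℂ) * (1 + w)) = -((x * Ssum (k + 2) 0 t : ℝ) : ℂ) + -(w * (x * Ssum (k + 2) 0 t : ℝ)) by ring,
    Complex.exp_add]
  push_cast
  ring

/-- normalised moment generating function -/
noncomputable def Fn (k n : ℕ) (x t : ℝ) (z : ℂ) : ℂ :=
  Complex.exp (-(z * bb k x t)) * Hc (k + 2) n (x * Complex.exp (z / bb k x t)) / Hc (k + 2) n x

lemma Fn_lim (k : ℕ) {x : ℝ} (hx : 0 < x) {t : ℕ → ℝ} (ht : Tendsto t atTop (𝓝[>] 0))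
    {N : ℕ → ℕ} (hn : ∀ᶠ n in atTop, x * Ssum (k + 2) 1 (t n) = N n)
    {z : ℕ → ℂ} {z0 : ℂ} (hz : Tendsto z atTop (𝓝 z0)) :
    Tendsto (fun n => Fn k (N n) x (t n) (z n)) atTop (𝓝 (Complex.exp (z0 ^ 2 / (2 * (k + 2))))) := by
  have hpos : ∀ᶠ n in atTop, 0 < t n := (tendsto_nhdsWithin_iff.mp ht).2
  have h1 := Nint_lim k hx ht hz
  have h0 := Nint_lim k hx ht (tendsto_const_nhds (x := (0 : ℂ)))
  have h2pi : ((2 * π : ℝ) : ℂ) ^ (1 / 2 : ℂ) ≠ 0 := by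
    rw [Ne, Complex.cpow_eq_zero_iff]
    have : ((2 * π : ℝ) : ℂ) ≠ 0 := by exact_mod_cast (by positivity : 2 * π ≠ 0)
    tauto
  have h2 := h1.div h0 (mul_ne_zero h2pi (Complex.exp_ne_zero _))
  have e : ((2 * π : ℝ) : ℂ) ^ (1 / 2 : ℂ) * Complex.exp (z0 ^ 2 / (2 * (k + 2))) /
      (((2 * π : ℝ) : ℂ) ^ (1 / 2 : ℂ) * Complex.exp (0 ^ 2 / (2 * (k + 2)))) = Complex.exp (z0 ^ 2 / (2 * (k + 2))) := by
    rw [mul_div_mul_left _ _ h2pi]; simp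
  rw [e] at h2
  refine h2.congr' ?_
  filter_upwards [hpos, hn] with n hp hnn
  simp only [Pi.div_apply]
  rw [Nint_Hc k (N n) hx hp hnn, Nint_Hc k (N n) hx hp hnn, zero_div, Complex.exp_zero, zero_mul, neg_zero, Complex.exp_zero, one_mul, mul_one]
  have hs := ss_pos k hx hp
  have hb := bb_pos k hx hp
  have hc : ((2 * π * ss k x (t n) : ℝ) : ℂ) * (Real.exp (-t n) : ℂ) ^ (N n) * Complex.exp (-(x * Ssum (k + 2) 0 (t n) : ℝ)) ≠ 0 := by
    refine mul_ne_zero (mul_ne_zero ?_ (pow_ne_zero _ ?_)) (Complex.exp_ne_zero _)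
    · exact_mod_cast (by positivity : 2 * π * ss k x (t n) ≠ 0)
    · exact_mod_cast (Real.exp_pos _).ne'
  rw [mul_div_mul_left _ _ hc]
  unfold Fn
  congr 4
  rw [← bb_sq k hx]
  have : (bb k x (t n) : ℂ) ≠ 0 := by exact_mod_cast hb.ne'
  push_cast
  field_simp


/-- point masses -/
noncomputable def pk (ℓ n : ℕ) (x : ℝ) (j : ℕ) : ℝ :=
  (Acount ℓ n j : ℝ) * x ^ j / ∑ i ∈ Finset.range (n + 1), (Acount ℓ n i : ℝ) * x ^ i

lemma pk_nonneg (ℓ n : ℕ) {x : ℝ} (hx : 0 < x) (j : ℕ) : 0 ≤ pk ℓ n x j := by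
  unfold pk; positivity

lemma expectK_eq (ℓ n : ℕ) (x : ℝ) (g : ℕ → ℝ) :
    expectK ℓ n x g = ∑ j ∈ Finset.range (n + 1), pk ℓ n x j * g j := by
  unfold expectK pk
  rw [Finset.sum_div]
  exact Finset.sum_congr rfl fun j _ => by ring

lemma Fn_eq (k n : ℕ) {x t : ℝ} (hx : 0 < x) (ht : 0 < t) (z : ℂ) :
    Fn k n x t z = ∑ j ∈ Finset.range (n + 1), (pk (k + 2) n x j : ℂ) *
      Complex.exp (z * (((j : ℝ) - bb k x t ^ 2) / bb k x t : ℝ)) := by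
  have hb := bb_pos k hx ht
  have hbc : (bb k x t : ℂ) ≠ 0 := by exact_mod_cast hb.ne'
  have hn : (1 / (n.factorial : ℂ)) ≠ 0 := by
    have : (n.factorial : ℂ) ≠ 0 := by exact_mod_cast n.factorial_ne_zero
    exact one_div_ne_zero this
  unfold Fn Hc pk
  rw [mul_left_comm, mul_div_mul_left _ _ hn, Finset.mul_sum, Finset.sum_div]
  refine Finset.sum_congr rfl fun j _ => ?_
  have e : z * (((j : ℝ) - bb k x t ^ 2) / bb k x t : ℝ) = -(z * bb k x t) + j * (z / bb k x t) := by
    push_cast; field_simp; ring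
  rw [e, Complex.exp_add, mul_pow, ← Complex.exp_nat_mul]
  push_cast
  ring

lemma Fn_unif (k : ℕ) {x : ℝ} (hx : 0 < x) {t : ℕ → ℝ} (ht : Tendsto t atTop (𝓝[>] 0))
    (hn : ∀ᶠ n in atTop, x * Ssum (k + 2) 1 (t n) = n) :
    TendstoLocallyUniformlyOn (fun n z => Fn k n x (t n) z) (fun z => Complex.exp (z ^ 2 / (2 * (k + 2)))) atTop Set.univ := by
  rw [tendstoLocallyUniformlyOn_univ, tendstoLocallyUniformly_iff_forall_tendsto]
  intro z0
  have hcont : Continuous (fun z : ℂ => Complex.exp (z ^ 2 / (2 * (k + 2)))) := by fun_prop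
  rw [tendsto_iff_seq_tendsto]
  intro v hv
  have h1 : Tendsto (fun j => (v j).1) atTop atTop := tendsto_fst.comp hv
  have h2 : Tendsto (fun j => (v j).2) atTop (𝓝 z0) := tendsto_snd.comp hv
  have h3 := Fn_lim k hx (ht.comp h1) (N := fun j => (v j).1) (h1.eventually hn) h2
  have h4 := (hcont.tendsto z0).comp h2
  have h5 := (h4.prodMk_nhds h3)
  exact h5.mono_right (nhds_le_uniformity _)

lemma Fn_deriv_lim (k : ℕ) {x : ℝ} (hx : 0 < x) {t : ℕ → ℝ} (ht : Tendsto t atTop (𝓝[>] 0))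
    (hn : ∀ᶠ n in atTop, x * Ssum (k + 2) 1 (t n) = n) :
    Tendsto (fun n => ∑ j ∈ Finset.range (n + 1), pk (k + 2) n x j) atTop (𝓝 1) ∧
    Tendsto (fun n => ∑ j ∈ Finset.range (n + 1), pk (k + 2) n x j * (((j : ℝ) - bb k x (t n) ^ 2) / bb k x (t n))) atTop (𝓝 0) ∧
    Tendsto (fun n => ∑ j ∈ Finset.range (n + 1), pk (k + 2) n x j * (((j : ℝ) - bb k x (t n) ^ 2) / bb k x (t n)) ^ 2) atTop (𝓝 (1 / ((k : ℝ) + 2))) := by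
  have hpos : ∀ᶠ n in atTop, 0 < t n := (tendsto_nhdsWithin_iff.mp ht).2
  have hk : (k : ℂ) + 2 ≠ 0 := by exact_mod_cast (show k + 2 ≠ 0 by omega)
  set d : ℕ → ℕ → ℝ := fun n j => ((j : ℝ) - bb k x (t n) ^ 2) / bb k x (t n) with hd
  have hfun : ∀ᶠ n in atTop, Fn k n x (t n) = fun z => ∑ j ∈ Finset.range (n + 1), (pk (k + 2) n x j : ℂ) *
      Complex.exp (z * d n j) := by
    filter_upwards [hpos] with n hp
    funext z; exact Fn_eq k n hx hp z
  have hder : ∀ (n : ℕ) (c : ℕ → ℂ), deriv (fun z => ∑ j ∈ Finset.range (n + 1), c j * Complex.exp (z * d n j)) =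
      fun z => ∑ j ∈ Finset.range (n + 1), (c j * d n j) * Complex.exp (z * d n j) := by
    intro n c
    funext z
    refine HasDerivAt.deriv ?_
    refine HasDerivAt.fun_sum fun j _ => ?_
    have := (((hasDerivAt_id z).mul_const (d n j : ℂ)).cexp).const_mul (c j)
    convert! this using 1
    simp only [id]; ring
  have hU := Fn_unif k hx ht hn
  have hdiff : ∀ᶠ n in atTop, DifferentiableOn ℂ (fun z => Fn k n x (t n) z) Set.univ := by
    filter_upwards [hfun] with n hf
    rw [hf]
    fun_prop
  have hU1 := hU.deriv hdiff isOpen_univ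
  have hdiff1 : ∀ᶠ n in atTop, DifferentiableOn ℂ ((deriv ∘ fun n z => Fn k n x (t n) z) n) Set.univ := by
    filter_upwards [hfun] with n hf
    simp only [Function.comp]
    rw [hf, hder]
    fun_prop
  have hU2 := hU1.deriv hdiff1 isOpen_univ
  have c0 := hU.tendsto_at (Set.mem_univ 0)
  have c1 := hU1.tendsto_at (Set.mem_univ 0)
  have c2 := hU2.tendsto_at (Set.mem_univ 0)
  have d1 : deriv (fun z : ℂ => Complex.exp (z ^ 2 / (2 * (k + 2)))) = fun z => z / (k + 2) * Complex.exp (z ^ 2 / (2 * (k + 2))) := by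
    funext z
    refine HasDerivAt.deriv ?_
    have := (((hasDerivAt_pow 2 z).div_const ((2 : ℂ) * (k + 2))).cexp)
    convert! this using 1
    push_cast
    field_simp
  have d2 : deriv (deriv (fun z : ℂ => Complex.exp (z ^ 2 / (2 * (k + 2))))) 0 = 1 / (k + 2) := by
    rw [d1]
    refine HasDerivAt.deriv ?_
    have h1 := (((hasDerivAt_pow 2 (0:ℂ)).div_const ((2 : ℂ) * (k + 2))).cexp)
    have := ((hasDerivAt_id (0:ℂ)).div_const ((k : ℂ) + 2)).mul h1
    convert! this using 1
    simp
  rw [d2] at c2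
  rw [d1] at c1
  simp only [zero_div, zero_mul] at c1
  have toReal : ∀ {f : ℕ → ℂ} {g : ℕ → ℝ} {l : ℂ} {l' : ℝ}, Tendsto f atTop (𝓝 l) → (f =ᶠ[atTop] fun n => (g n : ℂ)) → l = l' → Tendsto g atTop (𝓝 l') := by
    intro f g l l' h1 h2 h3
    have := (Complex.continuous_re.tendsto _).comp (h1.congr' h2)
    rw [h3] at this
    simpa [Function.comp_def] using this
  refine ⟨toReal c0 ?_ (by simp), toReal c1 ?_ (by simp), toReal c2 ?_ (by push_cast; rfl)⟩
  · filter_upwards [hfun] with n hf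
    rw [hf]; simp
  · filter_upwards [hfun] with n hf
    simp only [Function.comp]
    rw [hf, hder]; simp [hd]
  · filter_upwards [hfun] with n hf
    simp only [Function.comp]
    rw [hf, hder, hder]; simp [hd, sq, mul_assoc]

lemma pk_sum (k : ℕ) {x : ℝ} (hx : 0 < x) : ∀ᶠ n in atTop, ∑ j ∈ Finset.range (n + 1), pk (k + 2) n x j = 1 := by
  obtain ⟨t, ht, hn⟩ := saddle k x hx
  have h := (Fn_deriv_lim k hx ht hn).1
  filter_upwards [h.eventually_const_lt (show (0:ℝ) < 1 by norm_num)] with n hpos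
  unfold pk at hpos ⊢
  rw [← Finset.sum_div] at hpos ⊢
  refine div_self fun h0 => ?_
  rw [h0] at hpos; simp at hpos


lemma discrete_meas (p a : ℕ → ℝ) (hp : ∀ j, 0 ≤ p j) (s : Finset ℕ) :
    ∃ μ : ProbabilityMeasure ℝ, (∑ j ∈ s, p j = 1) →
      (∀ g : ℝ → ℝ, ∫ y, g y ∂(μ : Measure ℝ) = ∑ j ∈ s, p j * g (a j)) ∧
      (∀ g : ℝ → ℂ, ∫ y, g y ∂(μ : Measure ℝ) = ∑ j ∈ s, (p j : ℂ) * g (a j)) := by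
  by_cases h : ∑ j ∈ s, p j = 1
  · let m : Measure ℝ := ∑ j ∈ s, ENNReal.ofReal (p j) • Measure.dirac (a j)
    have hm : IsProbabilityMeasure m := by
      constructor
      simp only [m, Measure.finsetSum_apply, Measure.smul_apply, measure_univ, smul_eq_mul, mul_one]
      rw [← ENNReal.ofReal_sum_of_nonneg (fun j _ => hp j), h, ENNReal.ofReal_one]
    refine ⟨⟨m, hm⟩, fun _ => ⟨fun g => ?_, fun g => ?_⟩⟩
    · show ∫ y, g y ∂m = _
      simp only [m]
      rw [integral_finsetSum_measure]
      · refine Finset.sum_congr rfl fun j _ => ?_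
        rw [integral_smul_measure, integral_dirac, ENNReal.toReal_ofReal (hp j), smul_eq_mul]
      · intro j _
        exact (integrable_dirac (by simp)).smul_measure ENNReal.ofReal_ne_top
    · show ∫ y, g y ∂m = _
      simp only [m]
      rw [integral_finsetSum_measure]
      · refine Finset.sum_congr rfl fun j _ => ?_
        rw [integral_smul_measure, integral_dirac, ENNReal.toReal_ofReal (hp j), Complex.real_smul]
      · intro j _
        exact (integrable_dirac (by simp)).smul_measure ENNReal.ofReal_ne_top
  · exact ⟨⟨Measure.dirac 0, inferInstance⟩, fun h' => absurd h' h⟩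

lemma levy_discrete (p a : ℕ → ℕ → ℝ) (hp : ∀ n j, 0 ≤ p n j)
    (h1 : ∀ᶠ n in atTop, ∑ j ∈ Finset.range (n + 1), p n j = 1)
    (hc : ∀ τ : ℝ, Tendsto (fun n => ∑ j ∈ Finset.range (n + 1), (p n j : ℂ) *
      Complex.exp (τ * (a n j) * Complex.I)) atTop (𝓝 (Complex.exp (-(τ : ℂ) ^ 2 / 2))))
    (f : ℝ → ℝ) (hf : Continuous f) (hbdd : ∃ M : ℝ, ∀ s : ℝ, |f s| ≤ M) :
    Tendsto (fun n => ∑ j ∈ Finset.range (n + 1), p n j * f (a n j)) atTop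
      (𝓝 ((1 / Real.sqrt (2 * π)) * ∫ s : ℝ, f s * Real.exp (-s ^ 2 / 2))) := by
  choose μ hμ using fun n => discrete_meas (p n) (a n) (hp n) (Finset.range (n + 1))
  let γ : ProbabilityMeasure ℝ := ⟨ProbabilityTheory.gaussianReal 0 1, inferInstance⟩
  have hlim : Tendsto μ atTop (𝓝 γ) := by
    apply ProbabilityMeasure.tendsto_of_tendsto_charFun
    intro τ
    have e : charFun (γ : Measure ℝ) τ = Complex.exp (-(τ : ℂ) ^ 2 / 2) := by
      show charFun (ProbabilityTheory.gaussianReal 0 1) τ = _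
      rw [ProbabilityTheory.charFun_gaussianReal]
      congr 1
      simp
      ring
    rw [e]
    refine (hc τ).congr' ?_
    filter_upwards [h1] with n hn
    rw [charFun_apply_real, (hμ n hn).2]
  obtain ⟨M, hM⟩ := hbdd
  have := (ProbabilityMeasure.tendsto_iff_forall_integral_tendsto.1 hlim)
    (BoundedContinuousFunction.ofNormedAddCommGroup f hf M (by simpa using hM))
  have e : ∫ y, f y ∂(γ : Measure ℝ) = (1 / Real.sqrt (2 * π)) * ∫ s : ℝ, f s * Real.exp (-s ^ 2 / 2) := by
    show ∫ y, f y ∂(ProbabilityTheory.gaussianReal 0 1) = _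
    rw [ProbabilityTheory.integral_gaussianReal_eq_integral_smul one_ne_zero, ← integral_const_mul]
    congr 1
    funext s
    simp [ProbabilityTheory.gaussianPDFReal]
    ring
  simp only [BoundedContinuousFunction.coe_ofNormedAddCommGroup] at this
  rw [e] at this
  refine this.congr' ?_
  filter_upwards [h1] with n hn
  exact (hμ n hn).1 f

lemma std_identity {s : Finset ℕ} {p : ℕ → ℝ} {b : ℝ} (hb : 0 < b) (h1 : ∑ j ∈ s, p j = 1)
    {d : ℕ → ℝ} (hd : ∀ j : ℕ, d j = ((j : ℝ) - b ^ 2) / b) :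
    (∑ j ∈ s, p j * (j : ℝ) = b ^ 2 + b * ∑ j ∈ s, p j * d j) ∧
    (∑ j ∈ s, p j * ((j : ℝ) - (b ^ 2 + b * ∑ j ∈ s, p j * d j)) ^ 2 =
      b ^ 2 * (∑ j ∈ s, p j * d j ^ 2 - (∑ j ∈ s, p j * d j) ^ 2)) := by
  have hj : ∀ j : ℕ, (j : ℝ) = b ^ 2 + b * d j := fun j => by
    rw [hd]; field_simp; ring
  set m := ∑ j ∈ s, p j * d j with hm
  constructor
  · calc ∑ j ∈ s, p j * (j : ℝ) = ∑ j ∈ s, (b ^ 2 * p j + b * (p j * d j)) :=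
        Finset.sum_congr rfl fun j _ => by rw [hj j]; ring
      _ = _ := by rw [Finset.sum_add_distrib, ← Finset.mul_sum, ← Finset.mul_sum, h1, mul_one]
  · calc ∑ j ∈ s, p j * ((j : ℝ) - (b ^ 2 + b * m)) ^ 2
        = ∑ j ∈ s, (b ^ 2 * (p j * d j ^ 2) + ((-2 * b ^ 2 * m) * (p j * d j) + b ^ 2 * m ^ 2 * p j)) :=
        Finset.sum_congr rfl fun j _ => by rw [hj j]; ring
      _ = _ := by
        rw [Finset.sum_add_distrib, Finset.sum_add_distrib, ← Finset.mul_sum, ← Finset.mul_sum,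
          ← Finset.mul_sum, h1, ← hm]
        ring

/-- the normalized number of joint orbits converges in distribution to the
standard Gaussian: for every bounded continuous `f : ℝ → ℝ`, the expectations converge. -/
theorem clt_in_distribution (ℓ : ℕ) (hℓ : 2 ≤ ℓ) (x : ℝ) (hx : 0 < x)
    (f : ℝ → ℝ) (hf : Continuous f) (hbdd : ∃ M : ℝ, ∀ s : ℝ, |f s| ≤ M) :
    Tendsto (fun n : ℕ =>
        expectK ℓ n x (fun k =>
          f (((k : ℝ) - meanK ℓ n x) / Real.sqrt (varK ℓ n x))))
      atTop
      (nhds ((1 / Real.sqrt (2 * π)) * ∫ s : ℝ, f s * Real.exp (-s ^ 2 / 2))) := by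
  obtain ⟨k, rfl⟩ := Nat.exists_eq_add_of_le' hℓ
  obtain ⟨t, ht, hn⟩ := saddle k x hx
  have hsum := pk_sum k hx
  obtain ⟨-, l1, l2⟩ := Fn_deriv_lim k hx ht hn
  simp only [expectK_eq]
  refine levy_discrete (fun n j => pk (k + 2) n x j)
    (fun n j => ((j : ℝ) - meanK (k + 2) n x) / Real.sqrt (varK (k + 2) n x))
    (fun n j => pk_nonneg _ _ hx _) hsum ?_ f hf hbdd
  intro τ
  set d : ℕ → ℕ → ℝ := fun n j => ((j : ℝ) - bb k x (t n) ^ 2) / bb k x (t n) with hd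
  set m : ℕ → ℝ := fun n => ∑ j ∈ Finset.range (n + 1), pk (k + 2) n x j * d n j with hm
  set v : ℕ → ℝ := fun n => ∑ j ∈ Finset.range (n + 1), pk (k + 2) n x j * d n j ^ 2 - m n ^ 2 with hv
  have m0 : Tendsto m atTop (𝓝 0) := l1
  have k0 : (0 : ℝ) < 1 / ((k : ℝ) + 2) := by positivity
  have v0 : Tendsto v atTop (𝓝 (1 / ((k : ℝ) + 2))) := by
    have := Tendsto.sub l2 (m0.pow 2)
    simpa using this
  have vpos : ∀ᶠ n in atTop, 0 < v n := v0.eventually_const_lt k0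
  have s0 : Tendsto (fun n => √(v n)) atTop (𝓝 (√(1 / ((k : ℝ) + 2)))) := v0.sqrt
  have sne : √(1 / ((k : ℝ) + 2)) ≠ 0 := (Real.sqrt_pos.2 k0).ne'
  have r0 : Tendsto (fun n => τ / √(v n)) atTop (𝓝 (τ / √(1 / ((k : ℝ) + 2)))) :=
    tendsto_const_nhds.div s0 sne
  have z0 : Tendsto (fun n => ((τ / √(v n) : ℝ) : ℂ) * Complex.I) atTop
      (𝓝 (((τ / √(1 / ((k : ℝ) + 2)) : ℝ) : ℂ) * Complex.I)) :=
    ((Complex.continuous_ofReal.tendsto _).comp r0).mul_const _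
  have F0 := Fn_lim k hx ht (N := fun n => n) hn z0
  have c0 : Tendsto (fun n => Complex.exp (-(((τ / √(v n) * m n : ℝ) : ℂ) * Complex.I))) atTop (𝓝 1) := by
    have h := ((Complex.continuous_ofReal.tendsto _).comp (r0.mul m0)).mul_const Complex.I
    have := (Complex.continuous_exp.tendsto _).comp h.neg
    simpa [Function.comp_def] using this
  have P := c0.mul F0
  have lim_eq : (1 : ℂ) * Complex.exp ((((τ / √(1 / ((k : ℝ) + 2)) : ℝ) : ℂ) * Complex.I) ^ 2 / (2 * (k + 2)))
      = Complex.exp (-(τ : ℂ) ^ 2 / 2) := by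
    rw [one_mul]
    congr 1
    rw [mul_pow, Complex.I_sq, ← Complex.ofReal_pow, div_pow, Real.sq_sqrt k0.le]
    have : (k : ℂ) + 2 ≠ 0 := by exact_mod_cast (by omega : k + 2 ≠ 0)
    push_cast
    field_simp
  rw [lim_eq] at P
  refine P.congr' ?_
  have tpos : ∀ᶠ n in atTop, 0 < t n := ht.eventually self_mem_nhdsWithin
  filter_upwards [hsum, vpos, tpos] with n hs hvp htp
  have hb := bb_pos k hx htp
  obtain ⟨e1, e2⟩ := std_identity hb hs (d := d n) (fun j => rfl)
  have me : meanK (k + 2) n x = bb k x (t n) ^ 2 + bb k x (t n) * m n := by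
    rw [meanK, expectK_eq, e1]
  have ve : varK (k + 2) n x = bb k x (t n) ^ 2 * v n := by
    rw [varK, expectK_eq, me]; exact e2
  have se : √(varK (k + 2) n x) = bb k x (t n) * √(v n) := by
    rw [ve, Real.sqrt_mul (by positivity), Real.sqrt_sq hb.le]
  rw [Fn_eq k n hx htp, Finset.mul_sum]
  refine Finset.sum_congr rfl fun j _ => ?_
  rw [se, me, mul_left_comm, ← Complex.exp_add]
  congr 2
  have hvs : √(v n) ≠ 0 := (Real.sqrt_pos.2 hvp).ne'
  have hv' : ((√(v n) : ℝ) : ℂ) ≠ 0 := by exact_mod_cast hvs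
  have hb' : ((bb k x (t n) : ℝ) : ℂ) ≠ 0 := by exact_mod_cast hb.ne'
  push_cast
  field_simp
  ring
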